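/- arXiv:2203.16623 — 2 statements merged into one kernel-verified Lean document; each statement's English description precedes it below -/
import Mathlib

section
/- Under the push-subgradient algorithm, if the graph sequence {𝔾(t)} is uniformly strongly connected, the subgradients are uniformly bounded (‖g_i(t)‖₂ ≤ G for all i, t), and the stepsizes satisfy the step-size assumption, then lim_{t→∞} f( (Σ_{τ=0}^t α(τ) z̄(τ)) / (Σ_{τ=0}^t α(τ)) ) = f(z*). -/
open Filter Finset
open scoped InnerProductSpace

/-!
The ratios `z = x / y` are themselves averaged by row-stochastic matrices, up to a perturbation of
order `α t`. Over windows of length `card ι * L` the products of these matrices have entries bounded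
below, so the diameter `D t` of the estimates contracts up to a perturbation by the steps of the
window; hence `∑ D t ^ 2 < ∞`, and `∑ α t * D t < ∞` by AM-GM, without any monotonicity of `α`.

Column stochasticity makes the mean of the states `x` perform a subgradient step for the sum of the
`f i`, up to an error of order `α t * D t + α t ^ 2`, so its squared distance to a minimizer is
almost decreasing and the weighted optimality gaps are summable. At the estimates `z` the sum of
the `f i` may fall below its minimum, but only by a multiple of `D t`. Jensen's inequality then
transfers the summable gap to the weighted averages.
-/

section Transition

variable {ι R : Type*} [Fintype ι] [DecidableEq ι] [Semiring R]

/-- The transition matrix `W (t + k - 1) * ⋯ * W t` of a sequence of matrices over the window of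
length `k` starting at time `t`. -/
def transition (W : ℕ → Matrix ι ι R) (t : ℕ) : ℕ → Matrix ι ι R
  | 0 => 1
  | k + 1 => W (t + k) * transition W t k

lemma transition_mem {W : ℕ → Matrix ι ι R} {M : Submonoid (Matrix ι ι R)} (hW : ∀ t, W t ∈ M)
    (t k : ℕ) : transition W t k ∈ M := by
  induction k with
  | zero => exact M.one_mem
  | succ k ih => exact M.mul_mem (hW _) ih

lemma eq_transition_mulVec {W : ℕ → Matrix ι ι R} {y : ℕ → ι → R}
    (hy : ∀ t, y (t + 1) = (W t).mulVec (y t)) (t k : ℕ) :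
    y (t + k) = (transition W t k).mulVec (y t) := by
  induction k with
  | zero => simp [transition]
  | succ k ih => rw [← add_assoc, hy, ih, transition, Matrix.mulVec_mulVec]

end Transition

lemma exists_rel_of_transGen {V : Type*} {r : V → V → Prop} {S : Set V} {a b : V}
    (h : Relation.TransGen r a b) (ha : a ∈ S) (hb : b ∉ S) : ∃ u ∈ S, ∃ v ∉ S, r u v := by
  by_contra! hclosed
  exact h.closed' (P := (· ∉ S)) (fun huv hv hu => hclosed _ hu _ hv huv) hb ha

lemma eq_univ_of_ssubset_succ {ι : Type*} [Fintype ι] {A : ℕ → Finset ι}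
    (hmono : Monotone A) (hA : ∀ m, A m ≠ univ → A m ⊂ A (m + 1)) :
    A (Fintype.card ι) = univ := by
  have hcard : ∀ m, A m = univ ∨ m ≤ #(A m) := by
    intro m
    induction m with
    | zero => exact .inr (Nat.zero_le _)
    | succ m ih =>
      by_cases hm : A m = univ
      · exact .inl (univ_subset_iff.1 (hm ▸ hmono m.le_succ))
      · exact .inr ((Nat.succ_le_succ (ih.resolve_left hm)).trans (card_lt_card (hA m hm)))
  exact (hcard _).elim id fun h => eq_univ_of_card _ (le_antisymm (card_le_univ _) h)

/-- A sequence of weight matrices with self-loops, weights bounded below by `β`, and uniformly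
strongly connected graphs: the edges `u ⟶ v` with `0 < W k v u` for some `k` in any window of
length `L` form a strongly connected graph. -/
structure UniformlyConnected {ι R : Type*} [Zero R] [Preorder R] (W : ℕ → Matrix ι ι R)
    (β : R) (L : ℕ) : Prop where
  bound_pos : 0 < β
  nonneg : ∀ t i j, 0 ≤ W t i j
  diag_pos : ∀ t i, 0 < W t i i
  le_of_pos : ∀ t i j, 0 < W t i j → β ≤ W t i j
  connected : ∀ t i j, Relation.TransGen (fun u v => ∃ k ∈ Ico t (t + L), 0 < W k v u) i j

namespace UniformlyConnected

variable {ι R : Type*} [Fintype ι] [DecidableEq ι] [Semiring R] [LinearOrder R]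
  [IsStrictOrderedRing R] {W : ℕ → Matrix ι ι R} {β : R} {L : ℕ}

lemma transition_nonneg (hW : UniformlyConnected W β L) (t k : ℕ) (i j : ι) :
    0 ≤ transition W t k i j := by
  induction k generalizing i with
  | zero => rw [transition, Matrix.one_apply]; split_ifs <;> simp
  | succ k ih => exact sum_nonneg fun l _ => mul_nonneg (hW.nonneg _ _ _) (ih l)

lemma mul_le_transition_succ (hW : UniformlyConnected W β L) (t k : ℕ) (i l j : ι) :
    W (t + k) i l * transition W t k l j ≤ transition W t (k + 1) i j :=
  single_le_sum (f := fun l => W (t + k) i l * transition W t k l j)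
    (fun _ _ => mul_nonneg (hW.nonneg _ _ _) (hW.transition_nonneg _ _ _ _)) (mem_univ l)

lemma transition_succ_pos (hW : UniformlyConnected W β L) {t k : ℕ} {i l j : ι}
    (hil : 0 < W (t + k) i l) (hlj : 0 < transition W t k l j) : 0 < transition W t (k + 1) i j :=
  (mul_pos hil hlj).trans_le (hW.mul_le_transition_succ t k i l j)

lemma transition_pos_mono (hW : UniformlyConnected W β L) {t k m : ℕ} (hkm : k ≤ m) {i j : ι}
    (h : 0 < transition W t k i j) : 0 < transition W t m i j := by
  induction m, hkm using Nat.le_induction with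
  | base => exact h
  | succ m _ ih => exact hW.transition_succ_pos (hW.diag_pos _ _) ih

lemma pow_le_transition_of_pos (hW : UniformlyConnected W β L) {t k : ℕ} {i j : ι}
    (h : 0 < transition W t k i j) : β ^ k ≤ transition W t k i j := by
  induction k generalizing i with
  | zero =>
    obtain rfl : i = j := by
      by_contra hij
      simp [transition, hij] at h
    simp [transition]
  | succ k ih =>
    obtain ⟨l, -, hl⟩ : ∃ l ∈ univ, 0 < W (t + k) i l * transition W t k l j :=
      (sum_pos_iff_of_nonneg fun l _ =>
        mul_nonneg (hW.nonneg _ _ _) (hW.transition_nonneg _ _ _ _)).1 h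
    have hW_pos : 0 < W (t + k) i l := pos_of_mul_pos_left hl (hW.transition_nonneg _ _ _ _)
    have htrans_pos : 0 < transition W t k l j := pos_of_mul_pos_right hl (hW.nonneg _ _ _)
    calc β ^ (k + 1) = β * β ^ k := pow_succ' β k
      _ ≤ W (t + k) i l * transition W t k l j :=
        mul_le_mul (hW.le_of_pos _ _ _ hW_pos) (ih htrans_pos) (pow_nonneg hW.bound_pos.le k)
          (hW.nonneg _ _ _)
      _ ≤ transition W t (k + 1) i j := hW.mul_le_transition_succ t k i l j

lemma exists_transition_add_pos (hW : UniformlyConnected W β L) {t k : ℕ} {b j : ι}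
    (hb : ¬ 0 < transition W t k b j) :
    ∃ v, ¬ 0 < transition W t k v j ∧ 0 < transition W t (k + L) v j := by
  have hj : 0 < transition W t k j j :=
    hW.transition_pos_mono k.zero_le (by simp [transition])
  obtain ⟨u, hu, v, hv, q, hq, hquv⟩ := exists_rel_of_transGen
    (S := {i | 0 < transition W t k i j}) (hW.connected (t + k) j b) hj hb
  rw [mem_Ico] at hq
  obtain ⟨p, rfl⟩ := Nat.exists_eq_add_of_le ((Nat.le_add_right t k).trans hq.1)
  have hvp : 0 < transition W t (p + 1) v j :=
    hW.transition_succ_pos hquv (hW.transition_pos_mono (by lia) hu)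
  exact ⟨v, hv, hW.transition_pos_mono (by lia) hvp⟩

lemma transition_card_mul_pos (hW : UniformlyConnected W β L) (t : ℕ) (i j : ι) :
    0 < transition W t (Fintype.card ι * L) i j := by
  let reached (m : ℕ) : Finset ι := {i | 0 < transition W t (m * L) i j}
  have hmem {m i} : i ∈ reached m ↔ 0 < transition W t (m * L) i j := by simp [reached]
  have hmono : Monotone reached := fun m m' hm i hi =>
    hmem.2 (hW.transition_pos_mono (Nat.mul_le_mul_right L hm) (hmem.1 hi))
  have hgrow : ∀ m, reached m ≠ univ → reached m ⊂ reached (m + 1) := by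
    intro m hm
    obtain ⟨b, hb⟩ := not_forall.1 (mt eq_univ_iff_forall.2 hm)
    obtain ⟨v, hv, hv'⟩ := hW.exists_transition_add_pos (mt hmem.2 hb)
    rw [← Nat.succ_mul] at hv'
    exact (ssubset_iff_of_subset (hmono m.le_succ)).2 ⟨v, hmem.2 hv', mt hmem.1 hv⟩
  exact hmem.1 (eq_univ_iff_forall.1 (eq_univ_of_ssubset_succ hmono hgrow) i)

lemma pow_le_transition (hW : UniformlyConnected W β L) (t : ℕ) (i j : ι) :
    β ^ (Fintype.card ι * L) ≤ transition W t (Fintype.card ι * L) i j :=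
  hW.pow_le_transition_of_pos (hW.transition_card_mul_pos t i j)

end UniformlyConnected

section RealSequences

lemma summable_of_le_mul_add {u a : ℕ → ℝ} {ρ : ℝ} {T : ℕ} (hρ : ρ < 1) (hu : ∀ t, 0 ≤ u t)
    (ha₀ : ∀ t, 0 ≤ a t) (ha : Summable a) (hua : ∀ t, u (t + T) ≤ ρ * u t + a t) :
    Summable u := by
  refine summable_of_sum_range_le (c := (∑ t ∈ range T, u t + ∑' t, a t) / (1 - ρ)) hu fun N => ?_
  rw [le_div_iff₀ (sub_pos.2 hρ)]
  have hsplit : ∑ t ∈ range N, u t ≤ ∑ t ∈ range T, u t + ∑ t ∈ range N, u (T + t) := by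
    rw [← sum_range_add]
    exact sum_le_sum_of_subset_of_nonneg (range_mono le_add_self) fun _ _ _ => hu _
  have hshift : ∑ t ∈ range N, u (T + t) ≤ ρ * ∑ t ∈ range N, u t + ∑ t ∈ range N, a t := by
    rw [mul_sum, ← sum_add_distrib]
    exact sum_le_sum fun t _ => add_comm T t ▸ hua t
  linarith [ha.sum_le_tsum (range N) fun t _ => ha₀ t]

lemma sq_mul_add_le {ρ : ℝ} (hρ₀ : 0 ≤ ρ) (hρ : ρ < 1) (u a : ℝ) :
    (ρ * u + a) ^ 2 ≤ ρ * u ^ 2 + (1 - ρ)⁻¹ * a ^ 2 := by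
  have hρ' : 0 < 1 - ρ := sub_pos.2 hρ
  have hgap : ρ * u ^ 2 + (1 - ρ)⁻¹ * a ^ 2 - (ρ * u + a) ^ 2 =
      ρ * (1 - ρ)⁻¹ * ((1 - ρ) * u - a) ^ 2 := by
    field_simp
    ring
  have : 0 ≤ ρ * (1 - ρ)⁻¹ * ((1 - ρ) * u - a) ^ 2 := by positivity
  linarith

lemma summable_sq_of_le_mul_add {u a : ℕ → ℝ} {ρ : ℝ} {T : ℕ} (hρ₀ : 0 ≤ ρ) (hρ : ρ < 1)
    (hu : ∀ t, 0 ≤ u t) (ha : Summable fun t => a t ^ 2)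
    (hua : ∀ t, u (t + T) ≤ ρ * u t + a t) : Summable fun t => u t ^ 2 := by
  have hρ' : 0 ≤ (1 - ρ)⁻¹ := inv_nonneg.2 (sub_nonneg.2 hρ.le)
  exact summable_of_le_mul_add hρ (fun t => sq_nonneg _)
    (fun t => mul_nonneg hρ' (sq_nonneg _)) (ha.mul_left _)
    fun t => (pow_le_pow_left₀ (hu _) (hua t) 2).trans (sq_mul_add_le hρ₀ hρ _ _)

lemma summable_sq_sum_range_add {a : ℕ → ℝ} (ha : Summable fun t => a t ^ 2) (T : ℕ) :
    Summable fun t => (∑ l ∈ range T, a (t + l)) ^ 2 := by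
  have hshift : Summable fun t => #(range T) * ∑ l ∈ range T, a (t + l) ^ 2 :=
    (summable_sum fun l _ => (summable_nat_add_iff l).2 ha).mul_left _
  exact hshift.of_nonneg_of_le (fun t => sq_nonneg _) fun t => sq_sum_le_card_mul_sum_sq

lemma summable_mul_of_summable_sq {a b : ℕ → ℝ} (ha : Summable fun t => a t ^ 2)
    (hb : Summable fun t => b t ^ 2) : Summable fun t => a t * b t :=
  (ha.add hb).of_norm_bounded fun t => by
    rw [Real.norm_eq_abs, abs_mul]
    nlinarith [sq_nonneg (|a t| - |b t|), sq_abs (a t), sq_abs (b t)]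

end RealSequences

section Averaging

variable {ι V : Type*} [SeminormedAddCommGroup V]

lemma norm_sub_le_diam_range [Finite ι] (z : ι → V) (i j : ι) :
    ‖z i - z j‖ ≤ Metric.diam (Set.range z) :=
  dist_eq_norm (z i) (z j) ▸ Metric.dist_le_diam_of_mem (Set.finite_range z).isBounded
    (Set.mem_range_self i) (Set.mem_range_self j)

variable [Fintype ι] [NormedSpace ℝ V]

lemma norm_sub_sum_smul_le_diam_range {a : ι → ℝ} (ha : ∀ j, 0 ≤ a j) (ha₁ : ∑ j, a j = 1)
    (z : ι → V) (i : ι) : ‖z i - ∑ j, a j • z j‖ ≤ Metric.diam (Set.range z) := by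
  have hmem : ∑ j, a j • z j ∈ Metric.closedBall (z i) (Metric.diam (Set.range z)) :=
    (convex_closedBall _ _).sum_mem (fun j _ => ha j) ha₁ fun j _ =>
      mem_closedBall_iff_norm.2 (norm_sub_le_diam_range z j i)
  exact mem_closedBall_iff_norm'.1 hmem

-- Couple the two distributions independently: the coordinates agree with probability `∑ a i * b i`.
lemma norm_sum_smul_sub_sum_smul_le {a b : ι → ℝ} (ha : ∀ i, 0 ≤ a i) (hb : ∀ i, 0 ≤ b i)
    (ha₁ : ∑ i, a i = 1) (hb₁ : ∑ i, b i = 1) (z : ι → V) :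
    ‖∑ i, a i • z i - ∑ i, b i • z i‖ ≤ (1 - ∑ i, a i * b i) * Metric.diam (Set.range z) := by
  classical
  set D := Metric.diam (Set.range z)
  have hcoupling : ∑ i, a i • z i - ∑ i, b i • z i = ∑ i, ∑ j, (a i * b j) • (z i - z j) := by
    have hleft : ∑ i, a i • z i = ∑ i, ∑ j, (a i * b j) • z i := by
      simp only [← sum_smul, ← mul_sum, hb₁, mul_one]
    have hright : ∑ j, b j • z j = ∑ i, ∑ j, (a i * b j) • z j := by
      rw [sum_comm]
      simp only [← sum_smul, ← sum_mul, ha₁, one_mul]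
    simp only [hleft, hright, smul_sub, sum_sub_distrib]
  have hterm (i j : ι) : ‖(a i * b j) • (z i - z j)‖ ≤
      a i * b j * D - if i = j then a i * b j * D else 0 := by
    rw [norm_smul, Real.norm_of_nonneg (mul_nonneg (ha i) (hb j))]
    split_ifs with hij
    · simp [hij]
    · rw [sub_zero]
      exact mul_le_mul_of_nonneg_left (norm_sub_le_diam_range z i j) (mul_nonneg (ha i) (hb j))
  calc ‖∑ i, a i • z i - ∑ i, b i • z i‖
      ≤ ∑ i, ∑ j, (a i * b j * D - if i = j then a i * b j * D else 0) := by
        rw [hcoupling]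
        exact norm_sum_le_of_le _ fun i _ => norm_sum_le_of_le _ fun j _ => hterm i j
    _ = (1 - ∑ i, a i * b i) * D := by
        simp only [sum_sub_distrib, sum_ite_eq, mem_univ, if_true, ← sum_mul, ← mul_sum, hb₁,
          mul_one, ha₁, sub_mul]

variable [DecidableEq ι] {S : ℕ → Matrix ι ι ℝ} {z e : ℕ → ι → V} {ε : ℕ → ℝ}

lemma norm_sub_sum_transition_smul_le (hS : ∀ t, S t ∈ Matrix.rowStochastic ℝ ι)
    (hz : ∀ t i, z (t + 1) i = ∑ j, S t i j • (z t j + e t j)) (he : ∀ t j, ‖e t j‖ ≤ ε t)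
    (t k : ℕ) (i : ι) :
    ‖z (t + k) i - ∑ j, transition S t k i j • z t j‖ ≤ ∑ l ∈ range k, ε (t + l) := by
  induction k generalizing i with
  | zero => simp [transition, Matrix.one_apply]
  | succ k ih =>
    set r : ι → V := fun m => z (t + k) m - ∑ j, transition S t k m j • z t j
    have hrec : z (t + (k + 1)) i - ∑ j, transition S t (k + 1) i j • z t j =
        ∑ m, S (t + k) i m • (r m + e (t + k) m) := by
      have hcomm : ∑ j, transition S t (k + 1) i j • z t j =
          ∑ m, S (t + k) i m • ∑ j, transition S t k m j • z t j := by
        simp only [transition, Matrix.mul_apply, sum_smul, smul_sum, mul_smul]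
        exact sum_comm
      simp only [r, ← add_assoc, hz, hcomm, ← sum_sub_distrib, ← smul_sub, add_sub_right_comm]
    have hmem : ∑ m, S (t + k) i m • (r m + e (t + k) m) ∈
        Metric.closedBall 0 (∑ l ∈ range (k + 1), ε (t + l)) := by
      refine (convex_closedBall _ _).sum_mem
        (fun m _ => Matrix.nonneg_of_mem_rowStochastic (hS _))
        (Matrix.sum_row_of_mem_rowStochastic (hS _) i) fun m _ => mem_closedBall_zero_iff.2 ?_
      rw [sum_range_succ]
      exact norm_add_le_of_le (ih m) (he _ m)
    rw [hrec]
    exact mem_closedBall_zero_iff.1 hmem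

lemma diam_range_add_le [Nonempty ι] (hS : ∀ t, S t ∈ Matrix.rowStochastic ℝ ι)
    (hz : ∀ t i, z (t + 1) i = ∑ j, S t i j • (z t j + e t j)) (he : ∀ t j, ‖e t j‖ ≤ ε t)
    {η : ℝ} {t T : ℕ} (hη : ∀ i j, η ≤ transition S t T i j) :
    Metric.diam (Set.range (z (t + T))) ≤
      (1 - η) * Metric.diam (Set.range (z t)) + 2 * ∑ l ∈ range T, ε (t + l) := by
  have hP : transition S t T ∈ Matrix.rowStochastic ℝ ι := transition_mem hS t T
  have hP₀ (i j : ι) : 0 ≤ transition S t T i j := Matrix.nonneg_of_mem_rowStochastic hP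
  have hP₁ := Matrix.sum_row_of_mem_rowStochastic hP
  refine Metric.diam_le_of_forall_dist_le_of_nonempty (Set.range_nonempty _) ?_
  rintro _ ⟨i, rfl⟩ _ ⟨k, rfl⟩
  have hoverlap : η ≤ ∑ j, transition S t T i j * transition S t T k j :=
    calc η = ∑ j, η * transition S t T k j := by rw [← mul_sum, hP₁, mul_one]
      _ ≤ _ := sum_le_sum fun j _ => mul_le_mul_of_nonneg_right (hη i j) (hP₀ k j)
  have hcontract := (norm_sum_smul_sub_sum_smul_le (hP₀ i) (hP₀ k) (hP₁ i) (hP₁ k) (z t)).trans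
    (mul_le_mul_of_nonneg_right (sub_le_sub_left hoverlap 1) Metric.diam_nonneg)
  have hi := norm_sub_sum_transition_smul_le hS hz he t T i
  have hk := norm_sub_sum_transition_smul_le hS hz he t T k
  calc dist (z (t + T) i) (z (t + T) k)
      ≤ dist (z (t + T) i) (∑ j, transition S t T i j • z t j) +
          dist (∑ j, transition S t T i j • z t j) (∑ j, transition S t T k j • z t j) +
          dist (∑ j, transition S t T k j • z t j) (z (t + T) k) := dist_triangle4 _ _ _ _
    _ ≤ _ := by
      rw [dist_comm _ (z (t + T) k), dist_eq_norm, dist_eq_norm, dist_eq_norm]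
      linarith

lemma summable_sq_diam_range [Nonempty ι] (hS : ∀ t, S t ∈ Matrix.rowStochastic ℝ ι)
    (hz : ∀ t i, z (t + 1) i = ∑ j, S t i j • (z t j + e t j)) (he : ∀ t j, ‖e t j‖ ≤ ε t)
    (hε : Summable fun t => ε t ^ 2) {η : ℝ} (hη₀ : 0 < η) {T : ℕ}
    (hη : ∀ t i j, η ≤ transition S t T i j) :
    Summable fun t => Metric.diam (Set.range (z t)) ^ 2 := by
  have hη₁ : η ≤ 1 := by
    obtain ⟨i⟩ := ‹Nonempty ι›
    exact (hη 0 i i).trans (Matrix.le_one_of_mem_rowStochastic (transition_mem hS 0 T))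
  refine summable_sq_of_le_mul_add (sub_nonneg.2 hη₁) (sub_lt_self 1 hη₀)
    (fun t => Metric.diam_nonneg) ?_ fun t => diam_range_add_le hS hz he (hη t)
  simpa only [mul_pow] using (summable_sq_sum_range_add hε T).mul_left (2 ^ 2)

end Averaging

/-- The auxiliary sequence `y` of the push-sum algorithm with weight matrices `W`. -/
structure IsPushSum {ι : Type*} [Fintype ι] (W : ℕ → Matrix ι ι ℝ) (y : ℕ → ι → ℝ) : Prop where
  weight_zero : ∀ i, y 0 i = 1
  weight_succ : ∀ t i, y (t + 1) i = ∑ j, W t i j * y t j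

/-- The weights with which the ratios `x / y` of the push-sum algorithm are averaged at time `t`,
meant for everywhere positive `y`. -/
noncomputable def ratioWeights {ι : Type*} (W : ℕ → Matrix ι ι ℝ) (y : ℕ → ι → ℝ) (t : ℕ) :
    Matrix ι ι ℝ :=
  .of fun i j => W t i j * y t j / y (t + 1) i

namespace IsPushSum

variable {ι : Type*} [Fintype ι] [DecidableEq ι] {W : ℕ → Matrix ι ι ℝ} {y : ℕ → ι → ℝ} {β : ℝ}
  {L : ℕ}

lemma sum_eq_card (hy : IsPushSum W y) (hcol : ∀ t, W t ∈ Matrix.colStochastic ℝ ι) (t : ℕ) :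
    ∑ i, y t i = Fintype.card ι := by
  induction t with
  | zero => simp [hy.weight_zero]
  | succ t ih =>
    calc ∑ i, y (t + 1) i = ∑ i, (W t).mulVec (y t) i :=
          sum_congr rfl fun i _ => hy.weight_succ t i
      _ = ∑ i, y t i := Matrix.sum_mulVec_of_mem_colStochastic (hcol t)
      _ = Fintype.card ι := ih

lemma nonneg (hy : IsPushSum W y) (hcol : ∀ t, W t ∈ Matrix.colStochastic ℝ ι) (t : ℕ) (i : ι) :
    0 ≤ y t i := by
  induction t generalizing i with
  | zero => simp [hy.weight_zero]
  | succ t ih =>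
    rw [hy.weight_succ]
    exact Matrix.nonneg_mulVec_of_mem_colStochastic (hcol t) ih i

lemma le_card (hy : IsPushSum W y) (hcol : ∀ t, W t ∈ Matrix.colStochastic ℝ ι) (t : ℕ) (i : ι) :
    y t i ≤ Fintype.card ι :=
  hy.sum_eq_card hcol t ▸ single_le_sum (fun j _ => hy.nonneg hcol t j) (mem_univ i)

lemma pow_le (hy : IsPushSum W y) (hcol : ∀ t, W t ∈ Matrix.colStochastic ℝ ι)
    (hW : UniformlyConnected W β L) (t : ℕ) (i : ι) : β ^ t ≤ y t i := by
  induction t with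
  | zero => simp [hy.weight_zero]
  | succ t ih =>
    calc β ^ (t + 1) = β * β ^ t := pow_succ' β t
      _ ≤ W t i i * y t i := mul_le_mul (hW.le_of_pos _ _ _ (hW.diag_pos t i)) ih
          (pow_nonneg hW.bound_pos.le t) (hW.nonneg _ _ _)
      _ ≤ y (t + 1) i := hy.weight_succ t i ▸ single_le_sum (f := fun j => W t i j * y t j)
          (fun j _ => mul_nonneg (hW.nonneg _ _ _) (hy.nonneg hcol t j)) (mem_univ i)

lemma pos (hy : IsPushSum W y) (hcol : ∀ t, W t ∈ Matrix.colStochastic ℝ ι)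
    (hW : UniformlyConnected W β L) (t : ℕ) (i : ι) : 0 < y t i :=
  (pow_pos hW.bound_pos t).trans_le (hy.pow_le hcol hW t i)

lemma pow_card_mul_le (hy : IsPushSum W y) (hcol : ∀ t, W t ∈ Matrix.colStochastic ℝ ι)
    (hW : UniformlyConnected W β L) (t : ℕ) (i : ι) : β ^ (Fintype.card ι * L) ≤ y t i := by
  rcases lt_or_ge t (Fintype.card ι * L) with ht | ht
  · have hβ : β ≤ 1 := (hW.le_of_pos _ _ _ (hW.diag_pos 0 i)).trans
      (Matrix.le_one_of_mem_colStochastic (hcol 0))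
    exact (pow_le_pow_of_le_one hW.bound_pos.le hβ ht.le).trans (hy.pow_le hcol hW t i)
  · obtain ⟨s, rfl⟩ := Nat.exists_eq_add_of_le' ht
    have : Nonempty ι := ⟨i⟩
    calc β ^ (Fintype.card ι * L)
        ≤ β ^ (Fintype.card ι * L) * Fintype.card ι :=
          le_mul_of_one_le_right (pow_nonneg hW.bound_pos.le _) (mod_cast Fintype.card_pos)
      _ = ∑ j, β ^ (Fintype.card ι * L) * y s j := by rw [← mul_sum, hy.sum_eq_card hcol]
      _ ≤ ∑ j, transition W s (Fintype.card ι * L) i j * y s j := sum_le_sum fun j _ =>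
          mul_le_mul_of_nonneg_right (hW.pow_le_transition s i j) (hy.nonneg hcol s j)
      _ = y (s + Fintype.card ι * L) i :=
          (congrFun (eq_transition_mulVec (fun t => funext (hy.weight_succ t)) s _) i).symm

lemma ratioWeights_mem_rowStochastic (hy : IsPushSum W y)
    (hcol : ∀ t, W t ∈ Matrix.colStochastic ℝ ι) (hW : UniformlyConnected W β L) (t : ℕ) :
    ratioWeights W y t ∈ Matrix.rowStochastic ℝ ι := by
  refine Matrix.mem_rowStochastic_iff_sum.2 ⟨fun i j => ?_, fun i => ?_⟩
  · exact div_nonneg (mul_nonneg (hW.nonneg _ _ _) (hy.nonneg hcol _ _)) (hy.nonneg hcol _ _)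
  · simp only [ratioWeights, Matrix.of_apply]
    rw [← sum_div, ← hy.weight_succ, div_self (hy.pos hcol hW _ i).ne']

lemma uniformlyConnected_ratioWeights [Nonempty ι] (hy : IsPushSum W y)
    (hcol : ∀ t, W t ∈ Matrix.colStochastic ℝ ι) (hW : UniformlyConnected W β L) :
    UniformlyConnected (ratioWeights W y)
      (β * β ^ (Fintype.card ι * L) / Fintype.card ι) L := by
  have : (0 : ℝ) < Fintype.card ι := mod_cast Fintype.card_pos
  have hβ := hW.bound_pos
  have hypos := hy.pos hcol hW
  have hpos_iff (t : ℕ) (i j : ι) : 0 < ratioWeights W y t i j ↔ 0 < W t i j := by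
    rw [ratioWeights, Matrix.of_apply, div_pos_iff_of_pos_right (hypos _ _),
      mul_pos_iff_of_pos_right (hypos _ _)]
  refine ⟨by positivity, fun t i j => ?_, fun t i => (hpos_iff t i i).2 (hW.diag_pos t i),
    fun t i j hij => ?_, fun t i j => ?_⟩
  · exact Matrix.nonneg_of_mem_rowStochastic (hy.ratioWeights_mem_rowStochastic hcol hW t)
  · exact div_le_div₀ (mul_nonneg (hW.nonneg _ _ _) (hypos _ _).le)
      (mul_le_mul (hW.le_of_pos _ _ _ ((hpos_iff t i j).1 hij)) (hy.pow_card_mul_le hcol hW t j)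
        (by positivity) (hW.nonneg _ _ _)) (hypos _ _) (hy.le_card hcol _ i)
  · simpa only [hpos_iff] using hW.connected t i j

end IsPushSum

/-- A run of the push-subgradient algorithm with weight matrices `W`, step sizes `α` and search
directions `g`: `z = x / y` is the agents' estimate of the minimizer. -/
structure IsPushSubgradientRun {ι V : Type*} [Fintype ι] [AddCommGroup V] [Module ℝ V]
    (W : ℕ → Matrix ι ι ℝ) (α : ℕ → ℝ) (g x : ℕ → ι → V) (y : ℕ → ι → ℝ)
    (z : ℕ → ι → V) : Prop extends IsPushSum W y where
  state_succ : ∀ t i, x (t + 1) i = ∑ j, W t i j • (x t j - α t • g t j)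
  ratio : ∀ t i, z t i = (y t i)⁻¹ • x t i

namespace IsPushSubgradientRun

variable {ι V : Type*} [Fintype ι] [DecidableEq ι] {W : ℕ → Matrix ι ι ℝ} {α : ℕ → ℝ}
  {y : ℕ → ι → ℝ} {β : ℝ} {L : ℕ}

section Module

variable [AddCommGroup V] [Module ℝ V] {g x z : ℕ → ι → V}

lemma state_eq_smul (h : IsPushSubgradientRun W α g x y z)
    (hcol : ∀ t, W t ∈ Matrix.colStochastic ℝ ι) (hW : UniformlyConnected W β L) (t : ℕ) (i : ι) :
    x t i = y t i • z t i := by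
  rw [h.ratio, smul_inv_smul₀ (h.pos hcol hW t i).ne']

lemma ratio_succ (h : IsPushSubgradientRun W α g x y z)
    (hcol : ∀ t, W t ∈ Matrix.colStochastic ℝ ι) (hW : UniformlyConnected W β L) (t : ℕ) (i : ι) :
    z (t + 1) i = ∑ j, ratioWeights W y t i j • (z t j + -((α t / y t j) • g t j)) := by
  rw [h.ratio, h.state_succ, smul_sum]
  refine sum_congr rfl fun j _ => ?_
  have hyj : y t j ≠ 0 := (h.pos hcol hW t j).ne'
  rw [h.state_eq_smul hcol hW, ← sub_eq_add_neg, ratioWeights, Matrix.of_apply]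
  match_scalars <;> field_simp

lemma sum_state_succ (h : IsPushSubgradientRun W α g x y z)
    (hcol : ∀ t, W t ∈ Matrix.colStochastic ℝ ι) (t : ℕ) :
    ∑ i, x (t + 1) i = ∑ i, x t i - α t • ∑ i, g t i := by
  simp only [h.state_succ]
  rw [sum_comm]
  simp only [← sum_smul, Matrix.sum_col_of_mem_colStochastic (hcol t), one_smul, sum_sub_distrib,
    ← smul_sum]

end Module

variable [Nonempty ι] [SeminormedAddCommGroup V] [NormedSpace ℝ V] {g x z : ℕ → ι → V} {G : ℝ}

lemma norm_sub_mean_state_le_diam_range (h : IsPushSubgradientRun W α g x y z)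
    (hcol : ∀ t, W t ∈ Matrix.colStochastic ℝ ι) (hW : UniformlyConnected W β L) (t : ℕ) (i : ι) :
    ‖z t i - (Fintype.card ι : ℝ)⁻¹ • ∑ j, x t j‖ ≤ Metric.diam (Set.range (z t)) := by
  have hcard : (Fintype.card ι : ℝ) ≠ 0 := mod_cast Fintype.card_ne_zero
  have hmean : (Fintype.card ι : ℝ)⁻¹ • ∑ j, x t j =
      ∑ j, ((Fintype.card ι : ℝ)⁻¹ * y t j) • z t j := by
    simp only [smul_sum, mul_smul, h.state_eq_smul hcol hW]
  rw [hmean]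
  refine norm_sub_sum_smul_le_diam_range
    (fun j => mul_nonneg (by positivity) (h.nonneg hcol t j)) ?_ (z t) i
  rw [← mul_sum, h.sum_eq_card hcol, inv_mul_cancel₀ hcard]

lemma summable_sq_diam_ratio (h : IsPushSubgradientRun W α g x y z)
    (hcol : ∀ t, W t ∈ Matrix.colStochastic ℝ ι) (hW : UniformlyConnected W β L)
    (hα : ∀ t, 0 ≤ α t) (hα_sq : Summable fun t => α t ^ 2) (hG : ∀ t i, ‖g t i‖ ≤ G) :
    Summable fun t => Metric.diam (Set.range (z t)) ^ 2 := by
  set c := β ^ (Fintype.card ι * L)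
  have hc : 0 < c := pow_pos hW.bound_pos _
  have hS := h.uniformlyConnected_ratioWeights hcol hW
  have hperturb (t : ℕ) (j : ι) : ‖-((α t / y t j) • g t j)‖ ≤ α t / c * G := by
    rw [norm_neg, norm_smul, Real.norm_of_nonneg (div_nonneg (hα t) (h.nonneg hcol t j))]
    exact mul_le_mul (div_le_div_of_nonneg_left (hα t) hc (h.pow_card_mul_le hcol hW t j))
      (hG t j) (norm_nonneg _) (div_nonneg (hα t) hc.le)
  refine summable_sq_diam_range (h.ratioWeights_mem_rowStochastic hcol hW)
    (h.ratio_succ hcol hW) hperturb ?_ (pow_pos hS.bound_pos _) hS.pow_le_transition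
  refine (hα_sq.mul_left ((G / c) ^ 2)).congr fun t => ?_
  ring

end IsPushSubgradientRun

section ConvexSums

open scoped NNReal Topology

variable {ι V : Type*}

lemma exists_forall_lipschitzOnWith [Finite ι] {X Y : Type*} [PseudoEMetricSpace X]
    [PseudoEMetricSpace Y] {φ : ι → X → Y} {s : Set X} (h : ∀ i, ∃ K, LipschitzOnWith K (φ i) s) :
    ∃ K, ∀ i, LipschitzOnWith K (φ i) s := by
  choose K hK using h
  obtain ⟨M, hM⟩ := (Set.finite_range K).bddAbove
  exact ⟨M, fun i => (hK i).weaken (hM (Set.mem_range_self i))⟩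

lemma exists_lipschitzOnWith_of_convexOn_of_isBounded [NormedAddCommGroup V] [NormedSpace ℝ V]
    [FiniteDimensional ℝ V] {φ : V → ℝ} (hφ : ConvexOn ℝ Set.univ φ) {s : Set V}
    (hs : Bornology.IsBounded s) : ∃ K, LipschitzOnWith K φ s := by
  have : ProperSpace V := FiniteDimensional.proper_real V
  obtain ⟨K, hK⟩ := LocallyLipschitzOn.exists_lipschitzOnWith_of_compact hs.isCompact_closure
    hφ.locallyLipschitz.locallyLipschitzOn
  exact ⟨K, hK.mono subset_closure⟩

variable [Fintype ι]

-- Contracting all the points towards `w` brings them into `U`; convexity undoes the contraction.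
lemma sum_apply_sub_mul_sum_norm_le [SeminormedAddCommGroup V] [NormedSpace ℝ V] {φ : ι → V → ℝ}
    {w : V} {U : Set V} {K : ℝ≥0} (hφ : ∀ j, ConvexOn ℝ Set.univ (φ j)) (hU : U ∈ 𝓝 w)
    (hK : ∀ j, LipschitzOnWith K (φ j) U) (hmin : ∀ v, ∑ j, φ j w ≤ ∑ j, φ j v) (z : ι → V)
    (u : V) : ∑ j, φ j w - K * ∑ j, ‖z j - u‖ ≤ ∑ j, φ j (z j) := by
  have hnear (v : V) : ∀ᶠ s in 𝓝[>] (0 : ℝ), AffineMap.lineMap w v s ∈ U := by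
    refine (AffineMap.lineMap_continuous.tendsto' 0 w ?_).mono_left nhdsWithin_le_nhds hU
    exact AffineMap.lineMap_apply_zero w v
  obtain ⟨s, hzU, huU, hs₁, hs₀⟩ : ∃ s : ℝ, (∀ j, AffineMap.lineMap w (z j) s ∈ U) ∧
      AffineMap.lineMap w u s ∈ U ∧ s < 1 ∧ 0 < s :=
    ((eventually_all.2 fun j => hnear (z j)).and ((hnear u).and
      ((eventually_nhdsWithin_of_eventually_nhds (eventually_lt_nhds one_pos)).and
        self_mem_nhdsWithin))).exists
  have hterm (j : ι) : φ j (AffineMap.lineMap w u s) - K * (s * ‖z j - u‖) ≤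
      (1 - s) * φ j w + s * φ j (z j) := by
    have hlip := (hK j).dist_le_mul _ huU _ (hzU j)
    have hdist : dist (AffineMap.lineMap w u s) (AffineMap.lineMap w (z j) s) = s * ‖z j - u‖ := by
      rw [dist_eq_norm', AffineMap.lineMap_apply_module', AffineMap.lineMap_apply_module',
        add_sub_add_right_eq_sub, ← smul_sub, sub_sub_sub_cancel_right, norm_smul,
        Real.norm_of_nonneg hs₀.le]
    have hconv := (hφ j).2 (Set.mem_univ w) (Set.mem_univ (z j)) (sub_nonneg.2 hs₁.le) hs₀.le
      (sub_add_cancel 1 s)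
    rw [← AffineMap.lineMap_apply_module, smul_eq_mul, smul_eq_mul] at hconv
    rw [hdist, Real.dist_eq] at hlip
    linarith [le_abs_self (φ j (AffineMap.lineMap w u s) - φ j (AffineMap.lineMap w (z j) s))]
  have hsum := sum_le_sum fun j (_ : j ∈ univ) => hterm j
  simp only [sum_sub_distrib, sum_add_distrib, ← mul_sum] at hsum
  have hscaled : s * (∑ j, φ j w - K * ∑ j, ‖z j - u‖) ≤ s * ∑ j, φ j (z j) := by
    linarith [hmin (AffineMap.lineMap w u s)]
  exact le_of_mul_le_mul_left hscaled hs₀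

lemma sum_apply_mean_le [Nonempty ι] [SeminormedAddCommGroup V] [NormedSpace ℝ V]
    {φ : ι → V → ℝ} {s : Set V} {K : ℝ≥0} (hs : Convex ℝ s) (hK : ∀ j, LipschitzOnWith K (φ j) s)
    {z : ι → V} (hz : ∀ j, z j ∈ s) :
    ∑ j, φ j ((Fintype.card ι : ℝ)⁻¹ • ∑ i, z i) ≤
      ∑ j, φ j (z j) + K * (Fintype.card ι * Metric.diam (Set.range z)) := by
  have hc₀ : ∀ _ : ι, 0 ≤ (Fintype.card ι : ℝ)⁻¹ := fun _ => by positivity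
  have hc₁ : ∑ _j : ι, (Fintype.card ι : ℝ)⁻¹ = 1 := by simp
  have hmean : (Fintype.card ι : ℝ)⁻¹ • ∑ i, z i ∈ s :=
    smul_sum (r := (Fintype.card ι : ℝ)⁻¹) (f := z) (s := univ) ▸
      hs.sum_mem (fun j _ => hc₀ j) hc₁ fun j _ => hz j
  have hterm (j : ι) : φ j ((Fintype.card ι : ℝ)⁻¹ • ∑ i, z i) ≤
      φ j (z j) + K * Metric.diam (Set.range z) := by
    have hlip := (hK j).dist_le_mul _ hmean _ (hz j)
    have hdist := norm_sub_sum_smul_le_diam_range hc₀ hc₁ z j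
    rw [← smul_sum, ← dist_eq_norm'] at hdist
    have := mul_le_mul_of_nonneg_left hdist K.coe_nonneg
    rw [Real.dist_eq] at hlip
    linarith [le_abs_self (φ j ((Fintype.card ι : ℝ)⁻¹ • ∑ i, z i) - φ j (z j))]
  calc ∑ j, φ j ((Fintype.card ι : ℝ)⁻¹ • ∑ i, z i)
      ≤ ∑ j, (φ j (z j) + K * Metric.diam (Set.range z)) := sum_le_sum fun j _ => hterm j
    _ = _ := by rw [sum_add_distrib, sum_const, card_univ, nsmul_eq_mul]; ring

lemma norm_sub_smul_mean_sub_sq_le [Nonempty ι] [SeminormedAddCommGroup V] [InnerProductSpace ℝ V]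
    {φ : ι → V → ℝ} {g z : ι → V} {u w : V} {a G δ : ℝ} (ha : 0 ≤ a) (hg : ∀ j, ‖g j‖ ≤ G)
    (hsub : ∀ j, φ j (z j) + ⟪g j, w - z j⟫_ℝ ≤ φ j w) (hδ : ∀ j, ‖z j - u‖ ≤ δ) :
    ‖u - a • (Fintype.card ι : ℝ)⁻¹ • ∑ j, g j - w‖ ^ 2 ≤
      ‖u - w‖ ^ 2 - 2 * a * ((Fintype.card ι : ℝ)⁻¹ * (∑ j, φ j (z j) - ∑ j, φ j w)) +
        (2 * G * (a * δ) + G ^ 2 * a ^ 2) := by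
  set c := (Fintype.card ι : ℝ)⁻¹
  have hc : 0 ≤ c := by positivity
  have hcard : c * Fintype.card ι = 1 := inv_mul_cancel₀ (mod_cast Fintype.card_ne_zero)
  have hagent (j : ι) : φ j (z j) - φ j w - G * δ ≤ ⟪g j, u - w⟫_ℝ := by
    have hsplit : ⟪g j, u - w⟫_ℝ = -⟪g j, z j - u⟫_ℝ - ⟪g j, w - z j⟫_ℝ := by
      simp only [inner_sub_right]
      ring
    have herr := (real_inner_le_norm (g j) (z j - u)).trans
      (mul_le_mul (hg j) (hδ j) (norm_nonneg _) ((norm_nonneg _).trans (hg j)))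
    linarith [hsub j]
  have hinner : c * (∑ j, φ j (z j) - ∑ j, φ j w) - G * δ ≤ ⟪c • ∑ j, g j, u - w⟫_ℝ := by
    have hsum := mul_le_mul_of_nonneg_left (sum_le_sum fun j (_ : j ∈ univ) => hagent j) hc
    rw [sum_sub_distrib, sum_sub_distrib, sum_const, card_univ, nsmul_eq_mul, mul_sub, ← mul_assoc,
      hcard, one_mul] at hsum
    rwa [real_inner_smul_left, sum_inner]
  have hstep : ‖c • ∑ j, g j‖ ≤ G := by
    have hsum := mul_le_mul_of_nonneg_left (norm_sum_le_of_le univ fun j _ => hg j) hc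
    rwa [sum_const, card_univ, nsmul_eq_mul, ← mul_assoc, hcard, one_mul,
      ← Real.norm_of_nonneg hc, ← norm_smul] at hsum
  have hexpand : ‖u - a • c • ∑ j, g j - w‖ ^ 2 =
      ‖u - w‖ ^ 2 - 2 * a * ⟪c • ∑ j, g j, u - w⟫_ℝ + a ^ 2 * ‖c • ∑ j, g j‖ ^ 2 := by
    rw [sub_right_comm, norm_sub_sq_real, real_inner_smul_right, real_inner_comm, norm_smul,
      mul_pow, Real.norm_eq_abs, sq_abs]
    ring
  rw [hexpand]
  have hquad := mul_le_mul_of_nonneg_left (pow_le_pow_left₀ (norm_nonneg _) hstep 2) (sq_nonneg a)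
  linarith [mul_le_mul_of_nonneg_left hinner (mul_nonneg zero_le_two ha)]

end ConvexSums

section Convergence

open scoped Topology

lemma bddAbove_range_and_summable_of_add_le_add {E u b : ℕ → ℝ} (hE : ∀ t, 0 ≤ E t)
    (hu : ∀ t, 0 ≤ u t) (hb : Summable b) (h : ∀ t, E (t + 1) + u t ≤ E t + b t) :
    BddAbove (Set.range E) ∧ Summable u := by
  obtain ⟨B, hB⟩ := hb.hasSum.tendsto_sum_nat.bddAbove_range
  have htelescope (N : ℕ) : E N + ∑ t ∈ range N, u t ≤ E 0 + ∑ t ∈ range N, b t := by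
    induction N with
    | zero => simp
    | succ N ih =>
      rw [sum_range_succ, sum_range_succ]
      linarith [h N]
  have hbound (N : ℕ) : E N + ∑ t ∈ range N, u t ≤ E 0 + B := by
    linarith [htelescope N, hB (Set.mem_range_self N)]
  refine ⟨⟨E 0 + B, ?_⟩, summable_of_sum_range_le (c := E 0 + B) hu fun N => ?_⟩
  · rintro _ ⟨N, rfl⟩
    linarith [hbound N, sum_nonneg fun t (_ : t ∈ range N) => hu t]
  · linarith [hbound N, hE N]

lemma tendsto_apply_centerMass_range {V : Type*} [AddCommGroup V] [Module ℝ V] {φ : V → ℝ}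
    (hφ : ConvexOn ℝ Set.univ φ) {m : ℝ} (hm : ∀ v, m ≤ φ v) {α : ℕ → ℝ} (hα : ∀ t, 0 ≤ α t)
    (hα_div : ¬ Summable α) {v : ℕ → V} (hgap : Summable fun t => α t * (φ (v t) - m)) :
    Tendsto (fun t => φ ((range t).centerMass α v)) atTop (𝓝 m) := by
  have hαsum : Tendsto (fun t => ∑ τ ∈ range t, α τ) atTop atTop :=
    (not_summable_iff_tendsto_nat_atTop_of_nonneg hα).1 hα_div
  have hupper : Tendsto (fun t => m + (∑' τ, α τ * (φ (v τ) - m)) / ∑ τ ∈ range t, α τ) atTop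
      (𝓝 m) := by
    simpa using (hαsum.const_div_atTop (∑' τ, α τ * (φ (v τ) - m))).const_add m
  refine tendsto_of_tendsto_of_tendsto_of_le_of_le' tendsto_const_nhds hupper
    (.of_forall fun t => hm _) ((hαsum.eventually_gt_atTop 0).mono fun t ht => ?_)
  have hjensen : φ ((range t).centerMass α v) ≤ (range t).centerMass α (φ ∘ v) :=
    hφ.map_centerMass_le (fun τ _ => hα τ) ht fun τ _ => Set.mem_univ _
  calc φ ((range t).centerMass α v)
      ≤ (∑ τ ∈ range t, α τ)⁻¹ * ∑ τ ∈ range t, α τ * φ (v τ) := hjensen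
    _ = m + (∑ τ ∈ range t, α τ * (φ (v τ) - m)) / ∑ τ ∈ range t, α τ := by
      simp only [mul_sub, sum_sub_distrib, ← sum_mul]
      field_simp
      ring
    _ ≤ _ := by
      gcongr
      exact hgap.sum_le_tsum _ fun τ _ => mul_nonneg (hα τ) (sub_nonneg.2 (hm _))

end Convergence

namespace IsPushSubgradientRun

open scoped NNReal Topology

variable {ι V : Type*} [Fintype ι] [DecidableEq ι] [Nonempty ι] [SeminormedAddCommGroup V]
  [InnerProductSpace ℝ V] {W : ℕ → Matrix ι ι ℝ} {β : ℝ} {L : ℕ} {α : ℕ → ℝ} {G : ℝ}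
  {g x z : ℕ → ι → V} {y : ℕ → ι → ℝ} {f : ι → V → ℝ} {w : V}

lemma norm_sub_mean_state_sq_succ_le (h : IsPushSubgradientRun W α g x y z)
    (hcol : ∀ t, W t ∈ Matrix.colStochastic ℝ ι) (hW : UniformlyConnected W β L)
    (hα : ∀ t, 0 ≤ α t) (hG : ∀ t i, ‖g t i‖ ≤ G)
    (hsub : ∀ t j, f j (z t j) + ⟪g t j, w - z t j⟫_ℝ ≤ f j w) (t : ℕ) :
    ‖(Fintype.card ι : ℝ)⁻¹ • ∑ i, x (t + 1) i - w‖ ^ 2 ≤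
      ‖(Fintype.card ι : ℝ)⁻¹ • ∑ i, x t i - w‖ ^ 2 -
        2 * α t * ((Fintype.card ι : ℝ)⁻¹ * (∑ j, f j (z t j) - ∑ j, f j w)) +
        (2 * G * (α t * Metric.diam (Set.range (z t))) + G ^ 2 * α t ^ 2) := by
  rw [h.sum_state_succ hcol, smul_sub, smul_comm]
  exact norm_sub_smul_mean_sub_sq_le (hα t) (hG t) (hsub t)
    (h.norm_sub_mean_state_le_diam_range hcol hW t)

lemma summable_mul_diam_ratio (h : IsPushSubgradientRun W α g x y z)
    (hcol : ∀ t, W t ∈ Matrix.colStochastic ℝ ι) (hW : UniformlyConnected W β L)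
    (hα : ∀ t, 0 ≤ α t) (hα_sq : Summable fun t => α t ^ 2) (hG : ∀ t i, ‖g t i‖ ≤ G) :
    Summable fun t => α t * Metric.diam (Set.range (z t)) :=
  summable_mul_of_summable_sq hα_sq (h.summable_sq_diam_ratio hcol hW hα hα_sq hG)

lemma bddAbove_norm_sub_mean_state_sq_and_summable_gap (h : IsPushSubgradientRun W α g x y z)
    (hcol : ∀ t, W t ∈ Matrix.colStochastic ℝ ι) (hW : UniformlyConnected W β L)
    (hα : ∀ t, 0 ≤ α t) (hα_sq : Summable fun t => α t ^ 2) (hG : ∀ t i, ‖g t i‖ ≤ G)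
    (hconv : ∀ i, ConvexOn ℝ Set.univ (f i)) {U : Set V} {K : ℝ≥0} (hU : U ∈ 𝓝 w)
    (hK : ∀ i, LipschitzOnWith K (f i) U) (hmin : ∀ v, ∑ i, f i w ≤ ∑ i, f i v)
    (hsub : ∀ t j, f j (z t j) + ⟪g t j, w - z t j⟫_ℝ ≤ f j w) :
    BddAbove (Set.range fun t => ‖(Fintype.card ι : ℝ)⁻¹ • ∑ i, x t i - w‖ ^ 2) ∧
      Summable fun t => α t * (∑ i, f i (z t i) - ∑ i, f i w) := by
  set n : ℝ := (Fintype.card ι : ℝ)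
  set D : ℕ → ℝ := fun t => Metric.diam (Set.range (z t))
  have hn : 0 < n := Nat.cast_pos.2 Fintype.card_pos
  have hαD : Summable fun t => α t * D t := h.summable_mul_diam_ratio hcol hW hα hα_sq hG
  have hgap (t : ℕ) : 0 ≤ ∑ i, f i (z t i) - ∑ i, f i w + K * (n * D t) := by
    have hlower := sum_apply_sub_mul_sum_norm_le hconv hU hK hmin (z t) (n⁻¹ • ∑ i, x t i)
    have hdist : ∑ i, ‖z t i - n⁻¹ • ∑ j, x t j‖ ≤ n * D t := by
      simpa [n] using
        sum_le_card_nsmul univ _ _ fun i _ => h.norm_sub_mean_state_le_diam_range hcol hW t i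
    linarith [mul_le_mul_of_nonneg_left hdist K.coe_nonneg]
  obtain ⟨hE, hu⟩ := bddAbove_range_and_summable_of_add_le_add
    (E := fun t => ‖n⁻¹ • ∑ i, x t i - w‖ ^ 2)
    (u := fun t => 2 * n⁻¹ * (α t * (∑ i, f i (z t i) - ∑ i, f i w + K * (n * D t))))
    (b := fun t => (2 * K + 2 * G) * (α t * D t) + G ^ 2 * α t ^ 2)
    (fun t => sq_nonneg _)
    (fun t => mul_nonneg (by positivity) (mul_nonneg (hα t) (hgap t)))
    ((hαD.mul_left _).add (hα_sq.mul_left _)) fun t => by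
      have hdescent := h.norm_sub_mean_state_sq_succ_le hcol hW hα hG hsub t
      have hcancel : n⁻¹ * (K * (n * D t)) = K * D t := by field_simp
      linear_combination hdescent + 2 * α t * hcancel
  refine ⟨hE, (((summable_mul_left_iff (by positivity)).1 hu).sub (hαD.mul_left (K * n))).congr
    fun t => ?_⟩
  ring

lemma exists_norm_ratio_sub_le (h : IsPushSubgradientRun W α g x y z)
    (hcol : ∀ t, W t ∈ Matrix.colStochastic ℝ ι) (hW : UniformlyConnected W β L)
    (hα : ∀ t, 0 ≤ α t) (hα_sq : Summable fun t => α t ^ 2) (hG : ∀ t i, ‖g t i‖ ≤ G)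
    (hE : BddAbove (Set.range fun t => ‖(Fintype.card ι : ℝ)⁻¹ • ∑ i, x t i - w‖ ^ 2)) :
    ∃ r, ∀ t i, ‖z t i - w‖ ≤ r := by
  obtain ⟨B, hB⟩ := hE
  obtain ⟨M, hM⟩ :=
    (h.summable_sq_diam_ratio hcol hW hα hα_sq hG).tendsto_atTop_zero.bddAbove_range
  refine ⟨√M + √B, fun t i => ?_⟩
  have hdiam := (le_abs_self _).trans (Real.abs_le_sqrt (hM (Set.mem_range_self t)))
  have hmean := (le_abs_self _).trans (Real.abs_le_sqrt (hB (Set.mem_range_self t)))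
  exact (norm_sub_le_norm_sub_add_norm_sub _ _ _).trans
    (add_le_add ((h.norm_sub_mean_state_le_diam_range hcol hW t i).trans hdiam) hmean)

lemma summable_gap_mean_ratio (h : IsPushSubgradientRun W α g x y z)
    (hcol : ∀ t, W t ∈ Matrix.colStochastic ℝ ι) (hW : UniformlyConnected W β L)
    (hα : ∀ t, 0 ≤ α t) (hα_sq : Summable fun t => α t ^ 2) (hG : ∀ t i, ‖g t i‖ ≤ G)
    (hconv : ∀ i, ConvexOn ℝ Set.univ (f i))
    (hlip : ∀ i s, Bornology.IsBounded s → ∃ K, LipschitzOnWith K (f i) s)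
    (hmin : ∀ v, ∑ i, f i w ≤ ∑ i, f i v)
    (hsub : ∀ t j, f j (z t j) + ⟪g t j, w - z t j⟫_ℝ ≤ f j w) :
    Summable fun t =>
      α t * (∑ i, f i ((Fintype.card ι : ℝ)⁻¹ • ∑ j, z t j) - ∑ i, f i w) := by
  obtain ⟨K₁, hK₁⟩ := exists_forall_lipschitzOnWith fun i =>
    hlip i (Metric.closedBall w 1) Metric.isBounded_closedBall
  obtain ⟨hE, hgap⟩ := h.bddAbove_norm_sub_mean_state_sq_and_summable_gap hcol hW hα hα_sq hG
    hconv (Metric.closedBall_mem_nhds w one_pos) hK₁ hmin hsub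
  obtain ⟨r, hr⟩ := h.exists_norm_ratio_sub_le hcol hW hα hα_sq hG hE
  obtain ⟨K, hK⟩ := exists_forall_lipschitzOnWith fun i =>
    hlip i (Metric.closedBall w r) Metric.isBounded_closedBall
  refine (hgap.add ((h.summable_mul_diam_ratio hcol hW hα hα_sq hG).mul_left
    (K * Fintype.card ι : ℝ))).of_nonneg_of_le
      (fun t => mul_nonneg (hα t) (sub_nonneg.2 (hmin _))) fun t => ?_
  have hmean := sum_apply_mean_le (convex_closedBall w r) hK fun i =>
    mem_closedBall_iff_norm.2 (hr t i)
  linarith [mul_le_mul_of_nonneg_left hmean (hα t)]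

end IsPushSubgradientRun

theorem stmt_0_general {ι V : Type*} [Fintype ι] [DecidableEq ι] [Nonempty ι]
    [SeminormedAddCommGroup V] [InnerProductSpace ℝ V] {W : ℕ → Matrix ι ι ℝ} {β : ℝ} {L : ℕ}
    {α : ℕ → ℝ} {g x z : ℕ → ι → V} {y : ℕ → ι → ℝ} {f : ι → V → ℝ} {w : V} {G : ℝ}
    (hW : UniformlyConnected W β L) (hcol : ∀ t, W t ∈ Matrix.colStochastic ℝ ι)
    (hrun : IsPushSubgradientRun W α g x y z)
    (hα : ∀ t, 0 ≤ α t) (hα_div : ¬ Summable α) (hα_sq : Summable fun t => α t ^ 2)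
    (hG : ∀ t i, ‖g t i‖ ≤ G)
    (hconv : ∀ i, ConvexOn ℝ Set.univ (f i))
    (hlip : ∀ i s, Bornology.IsBounded s → ∃ K, LipschitzOnWith K (f i) s)
    (hmin : ∀ v, ∑ i, f i w ≤ ∑ i, f i v)
    (hsub : ∀ t j, f j (z t j) + ⟪g t j, w - z t j⟫_ℝ ≤ f j w) :
    Tendsto (fun t => ∑ i, f i ((range t).centerMass α fun τ =>
      (Fintype.card ι : ℝ)⁻¹ • ∑ j, z τ j)) atTop (nhds (∑ i, f i w)) := by
  have hsum : ConvexOn ℝ Set.univ fun v => ∑ i, f i v := by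
    simpa only [sum_fn] using sum_induction (s := univ) f (ConvexOn ℝ Set.univ)
      (fun _ _ => ConvexOn.add) (convexOn_const 0 convex_univ) fun i _ => hconv i
  exact tendsto_apply_centerMass_range hsum hmin hα hα_div
    (hrun.summable_gap_mean_ratio hcol hW hα hα_sq hG hconv hlip hmin hsub)

theorem stmt_0
    (n : ℕ) (hn : 0 < n)
    (W : ℕ → Matrix (Fin n) (Fin n) ℝ)
    (hWnonneg : ∀ t i j, 0 ≤ W t i j)
    (hWcol : ∀ t j, ∑ i, W t i j = 1)
    (hWdiag : ∀ t i, 0 < W t i i)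
    (β : ℝ) (hβ : 0 < β)
    (hWβ : ∀ t i j, 0 < W t i j → β ≤ W t i j)
    (L : ℕ) (hL : 0 < L)
    (hUSC : ∀ t : ℕ, ∀ i j : Fin n,
      Relation.TransGen (fun u v : Fin n => ∃ k ∈ Finset.Ico t (t + L), 0 < W k v u) i j)
    (d : ℕ)
    (x g : ℕ → Fin n → EuclideanSpace ℝ (Fin d))
    (y : ℕ → Fin n → ℝ)
    (hy0 : ∀ i, y 0 i = 1)
    (hyrec : ∀ t i, y (t + 1) i = ∑ j, W t i j * y t j)
    (α : ℕ → ℝ) (hαpos : ∀ t, 0 < α t)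
    (hxrec : ∀ t i, x (t + 1) i = ∑ j, W t i j • (x t j - α t • g t j))
    (z : ℕ → Fin n → EuclideanSpace ℝ (Fin d))
    (hz : ∀ t i, z t i = (y t i)⁻¹ • x t i)
    (G : ℝ) (hG : ∀ t i, ‖g t i‖ ≤ G)
    (f : Fin n → EuclideanSpace ℝ (Fin d) → ℝ)
    (hconv : ∀ i, ConvexOn ℝ Set.univ (f i))
    (F : EuclideanSpace ℝ (Fin d) → ℝ)
    (hF : ∀ w, F w = (n : ℝ)⁻¹ * ∑ i, f i w)
    (zstar : EuclideanSpace ℝ (Fin d))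
    (hmin : ∀ w, F zstar ≤ F w)
    (hsub : ∀ t j w, f j (z t j) + ⟪g t j, w - z t j⟫_ℝ ≤ f j w)
    (hαmono : ∀ t, α (t + 1) ≤ α t)
    (hαdiv : ¬ Summable α)
    (hαsq : Summable fun t => α t ^ 2)
    (zbar : ℕ → EuclideanSpace ℝ (Fin d))
    (hzbar : ∀ t, zbar t = (n : ℝ)⁻¹ • ∑ i, z t i)
    :
    Tendsto (fun t =>
        F ((∑ τ ∈ Finset.range (t + 1), α τ)⁻¹ •
            ∑ τ ∈ Finset.range (t + 1), α τ • zbar τ))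
      atTop (nhds (F zstar)) := by
  have : Nonempty (Fin n) := ⟨⟨0, hn⟩⟩
  obtain rfl : F = fun w => (n : ℝ)⁻¹ * ∑ i, f i w := funext hF
  obtain rfl : zbar = fun t => (n : ℝ)⁻¹ • ∑ i, z t i := funext hzbar
  have hmin_sum (w) : ∑ i, f i zstar ≤ ∑ i, f i w :=
    le_of_mul_le_mul_left (hmin w) (inv_pos.2 (Nat.cast_pos.2 hn))
  have hconverge := stmt_0_general ⟨hβ, hWnonneg, hWdiag, hWβ, hUSC⟩
    (fun t => Matrix.mem_colStochastic_iff_sum.2 ⟨hWnonneg t, hWcol t⟩)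
    ⟨⟨hy0, hyrec⟩, hxrec, hz⟩ (fun t => (hαpos t).le) hαdiv hαsq hG hconv
    (fun i _ => exists_lipschitzOnWith_of_convexOn_of_isBounded (hconv i)) hmin_sum
    fun t j => hsub t j zstar
  rw [Fintype.card_fin] at hconverge
  exact (hconverge.comp (tendsto_add_atTop_nat 1)).const_mul _
end

section
/- Under the push-subgradient algorithm, if the graph sequence {𝔾(t)} is uniformly strongly connected and the subgradients are uniformly bounded (‖g_i(t)‖₂ ≤ G for all i, t), then there exists a constant C > 0, depending on n, L, G, x(0), g(0) and z* but not on T, such that for every integer T ≥ 1, running the algorithm with fixed stepsize α(t) = 1/√T for t ∈ {0,1,…,T−1} yields f( (Σ_{τ=0}^{T−1} z̄(τ)) / T ) − f(z*) ≤ C/√T. -/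
open Filter Finset
open scoped InnerProductSpace

/-!
Dividing the push-sum recursion by its weights turns it into an averaging of the ratios `z = x / y`
with the row-stochastic weights `W i j * y j / y' i`. These inherit uniform connectivity with a
smaller `β`, so over a window of `n * L` steps all their backward products are bounded below, the
disagreement of the `z i` contracts, and its sum over `T` steps is of order `1 + α * T`.

Column stochasticity makes the mean `u` of the `x i` perform a subgradient step evaluated at the
nearby points `z i`, and the usual expansion of `‖u - z*‖ ^ 2` bounds the average gap at the points
`z i`. To pass from these to the objective at their mean one needs a Lipschitz constant of the `f i`
along the whole run, although bounded subgradients at the visited points say nothing about other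
points. The constant is obtained by first confining the run to a ball: minimality of `z*` bounds the
gap from below by a multiple of the disagreement, so the descent inequality also bounds
`‖u - z*‖`, and convex functions are Lipschitz on balls.
-/

open scoped Matrix NNReal Topology
open Matrix (rowStochastic)

namespace PushSubgradient

variable {ι E : Type*} [Fintype ι]

section Mean

variable [AddCommGroup E] [Module ℝ E]

variable (ι E) in
/-- The arithmetic mean of a family of vectors, such as the states of the agents or the values of
their objectives, as a linear map. -/
noncomputable def mean : (ι → E) →ₗ[ℝ] E :=
  (Fintype.card ι : ℝ)⁻¹ • ∑ i, LinearMap.proj i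

theorem mean_apply (v : ι → E) : mean ι E v = (Fintype.card ι : ℝ)⁻¹ • ∑ i, v i := by
  simp [mean]

theorem mean_eq_sum (v : ι → E) : mean ι E v = ∑ i, (Fintype.card ι : ℝ)⁻¹ • v i := by
  rw [mean_apply, smul_sum]

theorem sum_inv_card [Nonempty ι] : ∑ _i : ι, (Fintype.card ι : ℝ)⁻¹ = 1 := by simp

theorem mean_const [Nonempty ι] (c : E) : mean ι E (fun _ ↦ c) = c := by
  rw [mean_eq_sum, ← sum_smul, sum_inv_card, one_smul]

theorem mean_mono {v w : ι → ℝ} (h : ∀ i, v i ≤ w i) : mean ι ℝ v ≤ mean ι ℝ w := by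
  simp only [mean_eq_sum]
  gcongr with i
  exact h i

theorem mean_mem [Nonempty ι] {s : Set E} (hs : Convex ℝ s) {v : ι → E} (hv : ∀ i, v i ∈ s) :
    mean ι E v ∈ s := by
  rw [mean_eq_sum]
  exact hs.sum_mem (fun _ _ ↦ by positivity) sum_inv_card fun i _ ↦ hv i

end Mean

theorem norm_mean_le [NormedAddCommGroup E] [NormedSpace ℝ E] [Nonempty ι] {v : ι → E} {r : ℝ}
    (hv : ∀ i, ‖v i‖ ≤ r) : ‖mean ι E v‖ ≤ r := by
  simpa using mean_mem (convex_closedBall (0 : E) r) (v := v) (by simpa using hv)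

theorem mean_inner [NormedAddCommGroup E] [InnerProductSpace ℝ E] (v : ι → E) (w : E) :
    ⟪mean ι E v, w⟫_ℝ = mean ι ℝ fun i ↦ ⟪v i, w⟫_ℝ := by
  rw [mean_apply, mean_apply, real_inner_smul_left, sum_inner, smul_eq_mul]

section Spread

variable [NormedAddCommGroup E]

/-- The disagreement of a family of vectors: the largest distance between two of them. -/
noncomputable def spread (z : ι → E) : ℝ := Metric.diam (Set.range z)

omit [Fintype ι] in
theorem spread_nonneg (z : ι → E) : 0 ≤ spread z := Metric.diam_nonneg

omit [Fintype ι] in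
theorem spread_le {z : ι → E} {r : ℝ} (hr : 0 ≤ r) (h : ∀ i j, ‖z i - z j‖ ≤ r) :
    spread z ≤ r := by
  refine Metric.diam_le_of_forall_dist_le hr ?_
  rintro _ ⟨i, rfl⟩ _ ⟨j, rfl⟩
  exact (dist_eq_norm _ _).trans_le (h i j)

variable [NormedSpace ℝ E]

theorem norm_sum_smul_sub_sum_smul_le {a b : ι → ℝ} {m : ℝ} (ha : ∀ i, 0 ≤ a i)
    (hb : ∀ i, 0 ≤ b i) (ha_sum : ∑ i, a i = m) (hb_sum : ∑ i, b i = m) (z : ι → E) :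
    ‖∑ i, a i • z i - ∑ i, b i • z i‖ ≤ m * spread z := by
  rcases (ha_sum ▸ sum_nonneg fun i _ ↦ ha i : 0 ≤ m).eq_or_lt with rfl | hm
  · have ha_zero := (sum_eq_zero_iff_of_nonneg fun i _ ↦ ha i).1 ha_sum
    have hb_zero := (sum_eq_zero_iff_of_nonneg fun i _ ↦ hb i).1 hb_sum
    rw [sum_eq_zero fun i hi ↦ by rw [ha_zero i hi, zero_smul],
      sum_eq_zero fun i hi ↦ by rw [hb_zero i hi, zero_smul], sub_zero, norm_zero, zero_mul]
  have center_mem {c : ι → ℝ} (hc : ∀ i, 0 ≤ c i) (hc_sum : ∑ i, c i = m) :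
      univ.centerMass c z ∈ convexHull ℝ (Set.range z) :=
    univ.centerMass_mem_convexHull (fun i _ ↦ hc i) (hc_sum ▸ hm) fun i _ ↦ Set.mem_range_self i
  have sum_eq {c : ι → ℝ} (hc_sum : ∑ i, c i = m) :
      ∑ i, c i • z i = m • univ.centerMass c z := by
    rw [centerMass, hc_sum, smul_inv_smul₀ hm.ne']
  have hbounded : Bornology.IsBounded (convexHull ℝ (Set.range z)) :=
    isBounded_convexHull.2 (Set.finite_range z).isBounded
  rw [sum_eq ha_sum, sum_eq hb_sum, ← smul_sub, norm_smul, Real.norm_of_nonneg hm.le,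
    ← dist_eq_norm, spread, ← convexHull_diam]
  gcongr
  exact Metric.dist_le_diam_of_mem hbounded (center_mem ha ha_sum) (center_mem hb hb_sum)

/-- If two rows of a stochastic matrix both put mass `γ` on the column `k`, that mass cancels in
the difference and only `1 - γ` is left to disagree on. -/
theorem norm_sum_smul_sub_sum_smul_le_of_common_mass {p q : ι → ℝ} {γ : ℝ}
    (hp : ∀ i, 0 ≤ p i) (hq : ∀ i, 0 ≤ q i) (hp_sum : ∑ i, p i = 1) (hq_sum : ∑ i, q i = 1)
    {k : ι} (hpk : γ ≤ p k) (hqk : γ ≤ q k) (z : ι → E) :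
    ‖∑ i, p i • z i - ∑ i, q i • z i‖ ≤ (1 - γ) * spread z := by
  classical
  have residual_nonneg {r : ι → ℝ} (hr : ∀ i, 0 ≤ r i) (hrk : γ ≤ r k) (i : ι) :
      0 ≤ (r - Pi.single k γ : ι → ℝ) i := by
    rcases eq_or_ne i k with rfl | hik
    · simpa using hrk
    · simpa [hik] using hr i
  have h := norm_sum_smul_sub_sum_smul_le (m := 1 - γ) (residual_nonneg hp hpk)
    (residual_nonneg hq hqk) (by simp [hp_sum]) (by simp [hq_sum]) z
  simpa only [Pi.sub_apply, sub_smul, sum_sub_distrib, sub_sub_sub_cancel_right] using h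

theorem norm_sub_sum_smul_le_spread {p : ι → ℝ} (hp : ∀ i, 0 ≤ p i) (hp_sum : ∑ i, p i = 1)
    (z : ι → E) (i : ι) : ‖z i - ∑ j, p j • z j‖ ≤ spread z := by
  classical
  have hsingle (j : ι) : 0 ≤ (Pi.single i 1 : ι → ℝ) j := by
    rw [Pi.single_apply]
    positivity
  simpa [Pi.single_apply, ite_smul] using
    norm_sum_smul_sub_sum_smul_le hsingle hp (by simp) hp_sum z

theorem norm_sub_mean_le_spread (z : ι → E) (i : ι) : ‖z i - mean ι E z‖ ≤ spread z := by
  have : Nonempty ι := ⟨i⟩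
  rw [mean_eq_sum]
  exact norm_sub_sum_smul_le_spread (fun _ ↦ by positivity) sum_inv_card z i

end Spread

section Transition

variable [DecidableEq ι] {W : ℕ → Matrix ι ι ℝ} {β : ℝ} {L : ℕ}

/-- The backward product `W (s + k - 1) * ⋯ * W s`, which carries states at time `s` to time
`s + k`. -/
def transition (W : ℕ → Matrix ι ι ℝ) (s : ℕ) : ℕ → Matrix ι ι ℝ
  | 0 => 1
  | k + 1 => W (s + k) * transition W s k

theorem transition_succ (W : ℕ → Matrix ι ι ℝ) (s k : ℕ) :
    transition W s (k + 1) = W (s + k) * transition W s k := rfl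

theorem transition_mulVec {y : ℕ → ι → ℝ} (hy : ∀ t, y (t + 1) = W t *ᵥ y t) (s k : ℕ) :
    transition W s k *ᵥ y s = y (s + k) := by
  induction k with
  | zero => exact Matrix.one_mulVec _
  | succ k ih => rw [transition_succ, ← Matrix.mulVec_mulVec, ih, ← add_assoc, hy]

theorem transition_mem_rowStochastic (hW : ∀ t, W t ∈ rowStochastic ℝ ι) (s k : ℕ) :
    transition W s k ∈ rowStochastic ℝ ι := by
  induction k with
  | zero => exact one_mem _
  | succ k ih => exact mul_mem (hW _) ih

/-- Nonnegative weights `W t i j`, the weight of the arc `j → i` at time `t`, whose positive values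
are at least `β`, with a self-loop at every vertex, and such that the union of the graphs over any
`L` consecutive times is strongly connected. -/
structure IsUniformlyConnected (W : ℕ → Matrix ι ι ℝ) (β : ℝ) (L : ℕ) : Prop where
  pos : 0 < β
  nonneg : ∀ t i j, 0 ≤ W t i j
  le_of_pos : ∀ t i j, 0 < W t i j → β ≤ W t i j
  diag_pos : ∀ t i, 0 < W t i i
  connected : ∀ t i j,
    Relation.TransGen (fun u v ↦ ∃ k ∈ Finset.Ico t (t + L), 0 < W k v u) i j

theorem transition_nonneg (hW : ∀ t i j, 0 ≤ W t i j) (s k : ℕ) (i j : ι) :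
    0 ≤ transition W s k i j := by
  induction k generalizing i with
  | zero => rw [transition, Matrix.one_apply]; positivity
  | succ k ih => exact sum_nonneg fun l _ ↦ mul_nonneg (hW _ _ _) (ih l)

theorem mul_le_transition_succ (hW : ∀ t i j, 0 ≤ W t i j) (s k : ℕ) (i l j : ι) :
    W (s + k) i l * transition W s k l j ≤ transition W s (k + 1) i j :=
  single_le_sum (f := fun l ↦ W (s + k) i l * transition W s k l j)
    (fun l _ ↦ mul_nonneg (hW _ _ _) (transition_nonneg hW s k l j)) (mem_univ l)

namespace IsUniformlyConnected

omit [Fintype ι] [DecidableEq ι] in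
theorem window_pos [Nonempty ι] (hW : IsUniformlyConnected W β L) : 0 < L := by
  obtain ⟨i⟩ := ‹Nonempty ι›
  obtain ⟨_, ⟨k, hk, -⟩, -⟩ := Relation.TransGen.head'_iff.1 (hW.connected 0 i i)
  have := Finset.mem_Ico.1 hk
  omega

theorem transition_pos_mono (hW : IsUniformlyConnected W β L) {s k k' : ℕ} (hk : k ≤ k')
    {i j : ι} (h : 0 < transition W s k i j) : 0 < transition W s k' i j := by
  induction hk with
  | refl => exact h
  | step _ ih =>
    exact (mul_pos (hW.diag_pos _ i) ih).trans_le (mul_le_transition_succ hW.nonneg _ _ i i j)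

theorem transition_self_pos (hW : IsUniformlyConnected W β L) (s k : ℕ) (i : ι) :
    0 < transition W s k i i :=
  hW.transition_pos_mono k.zero_le (by simp [transition])

theorem pow_le_transition_of_pos (hW : IsUniformlyConnected W β L) {s k : ℕ} {i j : ι}
    (h : 0 < transition W s k i j) : β ^ k ≤ transition W s k i j := by
  induction k generalizing i with
  | zero =>
    rcases eq_or_ne i j with rfl | hij
    · simp [transition]
    · simp [transition, hij] at h
  | succ k ih =>
    obtain ⟨l, -, hl⟩ := exists_lt_of_sum_lt (s := univ) (f := fun _ ↦ (0 : ℝ))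
      (g := fun l ↦ W (s + k) i l * transition W s k l j)
      (by simpa [transition_succ, Matrix.mul_apply] using h)
    have hWl := pos_of_mul_pos_left hl (transition_nonneg hW.nonneg s k l j)
    have hl' := pos_of_mul_pos_right hl (hW.nonneg _ _ _)
    calc β ^ (k + 1) = β * β ^ k := pow_succ' β k
      _ ≤ W (s + k) i l * transition W s k l j :=
        mul_le_mul (hW.le_of_pos _ _ _ hWl) (ih hl') (pow_nonneg hW.pos.le k) hWl.le
      _ ≤ _ := mul_le_transition_succ hW.nonneg s k i l j

theorem transition_pos_of_arc (hW : IsUniformlyConnected W β L) {s m t k : ℕ}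
    (ht : t ∈ Finset.Ico (s + m) (s + k)) {u v j : ι} (hu : 0 < transition W s m u j)
    (harc : 0 < W t v u) : 0 < transition W s k v j := by
  obtain ⟨hmt, htk⟩ := Finset.mem_Ico.1 ht
  obtain ⟨q, rfl⟩ := Nat.exists_eq_add_of_le ((Nat.le_add_right s m).trans hmt)
  have hu' := hW.transition_pos_mono (Nat.add_le_add_iff_left.1 hmt) hu
  exact hW.transition_pos_mono (by omega : q + 1 ≤ k)
    ((mul_pos harc hu').trans_le (mul_le_transition_succ hW.nonneg s q v u j))

end IsUniformlyConnected

/-- The agents `i` that information starting at `j` at time `s` has reached by time `s + k`. -/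
noncomputable def reached (W : ℕ → Matrix ι ι ℝ) (s : ℕ) (j : ι) (k : ℕ) : Finset ι :=
  univ.filter fun i ↦ 0 < transition W s k i j

theorem mem_reached {s : ℕ} {i j : ι} {k : ℕ} :
    i ∈ reached W s j k ↔ 0 < transition W s k i j := by
  simp [reached]

omit [Fintype ι] [DecidableEq ι] in
theorem exists_rel_of_transGen {r : ι → ι → Prop} {a b : ι} (h : Relation.TransGen r a b)
    {s : Set ι} (ha : a ∈ s) (hb : b ∉ s) : ∃ u ∈ s, ∃ v ∉ s, r u v := by
  by_contra! hclosed
  exact Relation.TransGen.closed' (P := (· ∉ s))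
    (fun {u v} huv hv hu ↦ hclosed u hu v hv huv) h hb ha

namespace IsUniformlyConnected

theorem reached_mono (hW : IsUniformlyConnected W β L) (s : ℕ) (j : ι) :
    Monotone (reached W s j) := fun _ _ hk _ hi ↦
  mem_reached.2 (hW.transition_pos_mono hk (mem_reached.1 hi))

theorem self_mem_reached (hW : IsUniformlyConnected W β L) (s : ℕ) (j : ι) (k : ℕ) :
    j ∈ reached W s j k :=
  mem_reached.2 (hW.transition_self_pos s k j)

theorem reached_ssubset (hW : IsUniformlyConnected W β L) {s m : ℕ} {j : ι}
    (h : reached W s j m ≠ univ) : reached W s j m ⊂ reached W s j (m + L) := by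
  obtain ⟨i, hi⟩ : ∃ i, i ∉ reached W s j m := by simpa [eq_univ_iff_forall] using h
  obtain ⟨u, hu, v, hv, t, ht, harc⟩ := exists_rel_of_transGen (hW.connected (s + m) j i)
    (s := reached W s j m) (hW.self_mem_reached s j m) hi
  rw [add_assoc] at ht
  refine (ssubset_iff_of_subset (hW.reached_mono s j (Nat.le_add_right m L))).2 ⟨v, ?_, hv⟩
  exact mem_reached.2 (hW.transition_pos_of_arc ht (mem_reached.1 hu) harc)

theorem min_card_le_card_reached (hW : IsUniformlyConnected W β L) (s : ℕ) (j : ι) (m : ℕ) :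
    min (Fintype.card ι) m ≤ #(reached W s j (m * L)) := by
  induction m with
  | zero => simp
  | succ m ih =>
    rw [Nat.succ_mul]
    by_cases h : reached W s j (m * L) = univ
    · have := card_le_card (hW.reached_mono s j (Nat.le_add_right (m * L) L))
      rw [h, card_univ] at this
      exact (min_le_left _ _).trans this
    · have := card_lt_card (hW.reached_ssubset h)
      omega

theorem pow_le_transition (hW : IsUniformlyConnected W β L) (s : ℕ) (i j : ι) :
    β ^ (Fintype.card ι * L) ≤ transition W s (Fintype.card ι * L) i j := by
  have hcard := hW.min_card_le_card_reached s j (Fintype.card ι)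
  rw [min_self] at hcard
  have hall := eq_univ_of_card _ ((card_le_univ _).antisymm hcard)
  exact hW.pow_le_transition_of_pos (mem_reached.1 (hall ▸ mem_univ i))

end IsUniformlyConnected

end Transition

theorem mul_sum_le_of_window_contraction {D : ℕ → ℝ} {N : ℕ} {γ ε : ℝ} (hD : ∀ t, 0 ≤ D t)
    (hcontract : ∀ t, D (t + N) ≤ (1 - γ) * D t + ε) (hinit : ∀ k ≤ N, D k ≤ D 0 + ε) (T : ℕ) :
    γ * ∑ t ∈ range T, D t ≤ N * (D 0 + ε) + T * ε := by
  have hinitial : ∑ t ∈ range N, D t ≤ N * (D 0 + ε) := by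
    simpa [mul_add] using
      sum_le_card_nsmul (range N) D (D 0 + ε) fun t ht ↦ hinit t (mem_range.1 ht).le
  have hshifted : ∑ t ∈ range T, D (N + t) ≤ (1 - γ) * ∑ t ∈ range T, D t + T * ε := by
    calc ∑ t ∈ range T, D (N + t) ≤ ∑ t ∈ range T, ((1 - γ) * D t + ε) := by
          gcongr with t
          exact add_comm t N ▸ hcontract t
      _ = _ := by simp [sum_add_distrib, mul_sum]
  have hsplit : ∑ t ∈ range T, D t ≤ ∑ t ∈ range N, D t + ∑ t ∈ range T, D (N + t) := by
    rw [← sum_range_add]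
    exact sum_le_sum_of_subset_of_nonneg (range_mono (Nat.le_add_left T N)) fun t _ _ ↦ hD t
  linarith

theorem le_of_window_contraction {D : ℕ → ℝ} {N : ℕ} {γ ε : ℝ} (hN : 0 < N) (hγ : 0 < γ)
    (hγ_le_one : γ ≤ 1) (hε : 0 ≤ ε) (hD₀ : 0 ≤ D 0)
    (hcontract : ∀ t, D (t + N) ≤ (1 - γ) * D t + ε) (hinit : ∀ k ≤ N, D k ≤ D 0 + ε) (t : ℕ) :
    D t ≤ D 0 + ε + ε / γ := by
  induction t using Nat.strong_induction_on with
  | _ t ih =>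
    rcases le_total t N with htN | hNt
    · exact (hinit t htN).trans (le_add_of_nonneg_right (by positivity))
    · obtain ⟨s, rfl⟩ := Nat.exists_eq_add_of_le' hNt
      have hcancel : γ * (ε / γ) = ε := mul_div_cancel₀ ε hγ.ne'
      calc D (s + N) ≤ (1 - γ) * D s + ε := hcontract s
        _ ≤ (1 - γ) * (D 0 + ε + ε / γ) + ε := by
          have := sub_nonneg.2 hγ_le_one
          gcongr
          exact ih s (by omega)
        _ = D 0 + ε + ε / γ - γ * (D 0 + ε) := by linear_combination -hcancel
        _ ≤ D 0 + ε + ε / γ := sub_le_self _ (by positivity)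

section Consensus

variable [DecidableEq ι] [NormedAddCommGroup E] [NormedSpace ℝ E] {Q : ℕ → Matrix ι ι ℝ}
  {z e : ℕ → ι → E} {γ δ : ℝ}

/-- Averaging dynamics `z (t + 1) = Q t (z t - e t)` with row-stochastic weights `Q t` and
disturbances `e t` whose components have norm at most `δ`. -/
structure IsPerturbedAveraging (Q : ℕ → Matrix ι ι ℝ) (z e : ℕ → ι → E) (δ : ℝ) : Prop where
  stochastic : ∀ t, Q t ∈ rowStochastic ℝ ι
  step : ∀ t i, z (t + 1) i = ∑ j, Q t i j • (z t j - e t j)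
  norm_le : ∀ t i, ‖e t i‖ ≤ δ

namespace IsPerturbedAveraging

theorem norm_sub_sum_transition_smul_le (h : IsPerturbedAveraging Q z e δ) (s k : ℕ) (i : ι) :
    ‖z (s + k) i - ∑ j, transition Q s k i j • z s j‖ ≤ k * δ := by
  induction k generalizing i with
  | zero => simp [transition, Matrix.one_apply, ite_smul]
  | succ k ih =>
    set r : ι → E := fun l ↦ z (s + k) l - ∑ j, transition Q s k l j • z s j with hr
    have hstep : z (s + k + 1) i - ∑ j, transition Q s (k + 1) i j • z s j =
        ∑ l, Q (s + k) i l • (r l - e (s + k) l) := by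
      simp only [h.step, hr, transition_succ, Matrix.mul_apply, smul_sub, sum_sub_distrib, sum_smul,
        smul_sum, smul_smul]
      rw [sum_comm (s := (univ : Finset ι))]
      abel
    have hterm (l : ι) : r l - e (s + k) l ∈ Metric.closedBall (0 : E) ((k + 1) * δ) := by
      rw [mem_closedBall_zero_iff, add_one_mul]
      exact (norm_sub_le _ _).trans (add_le_add (ih l) (h.norm_le _ l))
    rw [← add_assoc, hstep, Nat.cast_succ, ← mem_closedBall_zero_iff]
    exact (convex_closedBall _ _).sum_mem
      (fun l _ ↦ Matrix.nonneg_of_mem_rowStochastic (h.stochastic _))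
      (Matrix.sum_row_of_mem_rowStochastic (h.stochastic _) i) fun l _ ↦ hterm l

theorem spread_add_le (h : IsPerturbedAveraging Q z e δ) {s k : ℕ} {l : ι}
    (hγ : ∀ i, γ ≤ transition Q s k i l) :
    spread (z (s + k)) ≤ (1 - γ) * spread (z s) + 2 * (k * δ) := by
  have hT := transition_mem_rowStochastic h.stochastic s k
  have hT_nonneg (i j : ι) : 0 ≤ transition Q s k i j := Matrix.nonneg_of_mem_rowStochastic hT
  have hγ_le_one : γ ≤ 1 := (hγ l).trans (Matrix.le_one_of_mem_rowStochastic hT)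
  have hδ : 0 ≤ δ := (norm_nonneg _).trans (h.norm_le 0 l)
  refine spread_le ?_ fun i j ↦ ?_
  · exact add_nonneg (mul_nonneg (sub_nonneg.2 hγ_le_one) (spread_nonneg _)) (by positivity)
  set p : ι → E := fun i ↦ ∑ j, transition Q s k i j • z s j
  have hcontract : ‖p i - p j‖ ≤ (1 - γ) * spread (z s) :=
    norm_sum_smul_sub_sum_smul_le_of_common_mass (hT_nonneg i) (hT_nonneg j)
      (Matrix.sum_row_of_mem_rowStochastic hT i) (Matrix.sum_row_of_mem_rowStochastic hT j)
      (hγ i) (hγ j) (z s)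
  have herror (i : ι) : ‖z (s + k) i - p i‖ ≤ k * δ :=
    h.norm_sub_sum_transition_smul_le s k i
  calc ‖z (s + k) i - z (s + k) j‖
      = ‖(p i - p j) + ((z (s + k) i - p i) - (z (s + k) j - p j))‖ := by congr 1; abel
    _ ≤ ‖p i - p j‖ + (‖z (s + k) i - p i‖ + ‖z (s + k) j - p j‖) :=
      (norm_add_le _ _).trans (by gcongr; exact norm_sub_le _ _)
    _ ≤ (1 - γ) * spread (z s) + 2 * (k * δ) := by linarith [herror i, herror j]

theorem spread_le_initial_add [Nonempty ι] (h : IsPerturbedAveraging Q z e δ) {k N : ℕ}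
    (hk : k ≤ N) : spread (z k) ≤ spread (z 0) + 2 * (N * δ) := by
  let l := Classical.arbitrary ι
  have hδ : 0 ≤ δ := (norm_nonneg _).trans (h.norm_le 0 l)
  have hk_add := h.spread_add_le (γ := 0) (s := 0) (k := k) (l := l) fun _ ↦
    Matrix.nonneg_of_mem_rowStochastic (transition_mem_rowStochastic h.stochastic 0 k)
  rw [zero_add, sub_zero, one_mul] at hk_add
  exact hk_add.trans (by gcongr)

theorem mul_sum_spread_le (h : IsPerturbedAveraging Q z e δ) {N : ℕ} {l : ι}
    (hγ : ∀ s i, γ ≤ transition Q s N i l) (T : ℕ) :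
    γ * ∑ t ∈ range T, spread (z t) ≤
      N * (spread (z 0) + 2 * (N * δ)) + T * (2 * (N * δ)) :=
  have : Nonempty ι := ⟨l⟩
  mul_sum_le_of_window_contraction (fun _ ↦ spread_nonneg _)
    (fun t ↦ h.spread_add_le (hγ t)) (fun _ ↦ h.spread_le_initial_add) T

theorem spread_le_of_window (h : IsPerturbedAveraging Q z e δ) {N : ℕ} {l : ι} (hN : 0 < N)
    (hγ_pos : 0 < γ) (hγ : ∀ s i, γ ≤ transition Q s N i l) (t : ℕ) :
    spread (z t) ≤ spread (z 0) + 2 * (N * δ) + 2 * (N * δ) / γ := by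
  have : Nonempty ι := ⟨l⟩
  have hδ : 0 ≤ δ := (norm_nonneg _).trans (h.norm_le 0 l)
  have hγ_le_one : γ ≤ 1 := (hγ 0 l).trans
    (Matrix.le_one_of_mem_rowStochastic (transition_mem_rowStochastic h.stochastic 0 N))
  exact le_of_window_contraction (D := fun t ↦ spread (z t)) hN hγ_pos hγ_le_one (by positivity)
    (spread_nonneg _) (fun t ↦ h.spread_add_le (hγ t)) (fun _ ↦ h.spread_le_initial_add) t

end IsPerturbedAveraging

end Consensus

section PushSum

variable [NormedAddCommGroup E] [NormedSpace ℝ E] {W : ℕ → Matrix ι ι ℝ} {y : ℕ → ι → ℝ}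
  {x e z : ℕ → ι → E} {β δ : ℝ} {L : ℕ}

/-- The scalar push-sum weights `y` driven by the column-stochastic matrices `W`. -/
structure IsPushSumWeights (W : ℕ → Matrix ι ι ℝ) (y : ℕ → ι → ℝ) : Prop where
  col_sum : ∀ t j, ∑ i, W t i j = 1
  weight_zero : y 0 = 1
  step : ∀ t, y (t + 1) = W t *ᵥ y t

/-- The perturbed push-sum dynamics: `x` follows the column-stochastic matrices `W` after
subtraction of the disturbance `e`, and the de-biased states are the ratios `z = x / y`. -/
structure IsPerturbedPushSum (W : ℕ → Matrix ι ι ℝ) (y : ℕ → ι → ℝ) (x e z : ℕ → ι → E) : Prop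
    extends IsPushSumWeights W y where
  state_step : ∀ t i, x (t + 1) i = ∑ j, W t i j • (x t j - e t j)
  ratio : ∀ t i, z t i = (y t i)⁻¹ • x t i

/-- The weights with which the ratios `z = x / y` are averaged by push-sum. -/
noncomputable def ratioWeights (W : ℕ → Matrix ι ι ℝ) (y : ℕ → ι → ℝ) (t : ℕ) : Matrix ι ι ℝ :=
  Matrix.of fun i j ↦ W t i j * y t j / y (t + 1) i

namespace IsPushSumWeights

theorem sum_eq_card (h : IsPushSumWeights W y) (t : ℕ) : ∑ i, y t i = Fintype.card ι := by
  induction t with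
  | zero => simp [h.weight_zero]
  | succ t ih =>
    simp only [h.step, Matrix.mulVec, dotProduct]
    rw [sum_comm]
    simp only [← sum_mul, h.col_sum, one_mul, ih]

theorem nonneg (h : IsPushSumWeights W y) (hW : ∀ t i j, 0 ≤ W t i j) (t : ℕ) (i : ι) :
    0 ≤ y t i := by
  induction t generalizing i with
  | zero => simp [h.weight_zero]
  | succ t ih =>
    rw [h.step]
    exact sum_nonneg fun j _ ↦ mul_nonneg (hW t i j) (ih j)

theorem le_card (h : IsPushSumWeights W y) (hW : ∀ t i j, 0 ≤ W t i j) (t : ℕ) (i : ι) :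
    y t i ≤ Fintype.card ι :=
  h.sum_eq_card t ▸ single_le_sum (fun j _ ↦ h.nonneg hW t j) (mem_univ i)

theorem pow_le (h : IsPushSumWeights W y) (hW : IsUniformlyConnected W β L)
    (t : ℕ) (i : ι) : β ^ (Fintype.card ι * L) ≤ y t i := by
  classical
  set N := Fintype.card ι * L
  have hβ_le_one : β ≤ 1 := (hW.le_of_pos 0 i i (hW.diag_pos 0 i)).trans
    (h.col_sum 0 i ▸ single_le_sum (fun j _ ↦ hW.nonneg 0 j i) (mem_univ i))
  rcases le_total t N with htN | hNt
  · calc β ^ N ≤ β ^ t := pow_le_pow_of_le_one hW.pos.le hβ_le_one htN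
      _ ≤ transition W 0 t i i := hW.pow_le_transition_of_pos (hW.transition_self_pos 0 t i)
      _ ≤ ∑ j, transition W 0 t i j :=
        single_le_sum (fun j _ ↦ transition_nonneg hW.nonneg 0 t i j) (mem_univ i)
      _ = y t i := by
        rw [← zero_add t, ← transition_mulVec h.step 0 t, zero_add, h.weight_zero]
        simp [Matrix.mulVec, dotProduct]
  · obtain ⟨s, rfl⟩ := Nat.exists_eq_add_of_le' hNt
    have : Nonempty ι := ⟨i⟩
    calc β ^ N ≤ β ^ N * Fintype.card ι :=
          le_mul_of_one_le_right (pow_nonneg hW.pos.le N)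
            (Nat.one_le_cast.2 Fintype.card_pos)
      _ = ∑ j, β ^ N * y s j := by rw [← mul_sum, h.sum_eq_card]
      _ ≤ ∑ j, transition W s N i j * y s j := by
        gcongr with j
        · exact h.nonneg hW.nonneg s j
        · exact hW.pow_le_transition s i j
      _ = y (s + N) i := by rw [← transition_mulVec h.step]; rfl

theorem pos (h : IsPushSumWeights W y) (hW : IsUniformlyConnected W β L) (t : ℕ) (i : ι) :
    0 < y t i :=
  (pow_pos hW.pos _).trans_le (h.pow_le hW t i)

theorem sum_ratioWeights (h : IsPushSumWeights W y) (hW : IsUniformlyConnected W β L) (t : ℕ)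
    (i : ι) : ∑ j, ratioWeights W y t i j = 1 := by
  simp only [ratioWeights, Matrix.of_apply]
  rw [← sum_div, div_eq_one_iff_eq (h.pos hW _ _).ne', h.step]
  rfl

theorem ratioWeights_pos_iff (h : IsPushSumWeights W y) (hW : IsUniformlyConnected W β L) {t : ℕ}
    {i j : ι} : 0 < ratioWeights W y t i j ↔ 0 < W t i j := by
  rw [ratioWeights, Matrix.of_apply, div_pos_iff_of_pos_right (h.pos hW _ _),
    mul_pos_iff_of_pos_right (h.pos hW _ _)]

theorem isUniformlyConnected_ratioWeights [Nonempty ι] (h : IsPushSumWeights W y)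
    (hW : IsUniformlyConnected W β L) :
    IsUniformlyConnected (ratioWeights W y)
      (β * β ^ (Fintype.card ι * L) / Fintype.card ι) L where
  pos := div_pos (mul_pos hW.pos (pow_pos hW.pos _)) (Nat.cast_pos.2 Fintype.card_pos)
  nonneg t i j := div_nonneg (mul_nonneg (hW.nonneg t i j) (h.pos hW t j).le) (h.pos hW _ i).le
  le_of_pos t i j hij := by
    have hWij := hW.le_of_pos t i j ((h.ratioWeights_pos_iff hW).1 hij)
    exact div_le_div₀ (mul_nonneg (hW.nonneg t i j) (h.pos hW t j).le)
      (mul_le_mul hWij (h.pow_le hW t j) (pow_nonneg hW.pos.le _) (hW.nonneg t i j))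
      (h.pos hW _ i) (h.le_card hW.nonneg _ i)
  diag_pos t i := (h.ratioWeights_pos_iff hW).2 (hW.diag_pos t i)
  connected t i j := by
    simpa only [h.ratioWeights_pos_iff hW] using hW.connected t i j

end IsPushSumWeights

namespace IsPerturbedPushSum

theorem ratio_zero (h : IsPerturbedPushSum W y x e z) : z 0 = x 0 := by
  funext i
  simp [h.ratio, h.weight_zero]

theorem state_eq (h : IsPerturbedPushSum W y x e z) (hW : IsUniformlyConnected W β L) (t : ℕ)
    (i : ι) : x t i = y t i • z t i := by
  rw [h.ratio, smul_inv_smul₀ (h.pos hW t i).ne']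

theorem ratio_step (h : IsPerturbedPushSum W y x e z) (hW : IsUniformlyConnected W β L) (t : ℕ)
    (i : ι) :
    z (t + 1) i = ∑ j, ratioWeights W y t i j • (z t j - (y t j)⁻¹ • e t j) := by
  rw [h.ratio, h.state_step, smul_sum]
  refine sum_congr rfl fun j _ ↦ ?_
  rw [h.ratio t j, ← smul_sub, smul_smul, smul_smul, ratioWeights, Matrix.of_apply,
    div_eq_inv_mul, ← mul_assoc, mul_inv_cancel_right₀ (h.pos hW t j).ne']

theorem isPerturbedAveraging [DecidableEq ι] (h : IsPerturbedPushSum W y x e z)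
    (hW : IsUniformlyConnected W β L) (he : ∀ t i, ‖e t i‖ ≤ δ) :
    IsPerturbedAveraging (ratioWeights W y) z (fun t i ↦ (y t i)⁻¹ • e t i)
      (δ / β ^ (Fintype.card ι * L)) where
  stochastic t := Matrix.mem_rowStochastic_iff_sum.2
    ⟨fun i j ↦ div_nonneg (mul_nonneg (hW.nonneg t i j) (h.pos hW t j).le) (h.pos hW _ i).le,
      h.sum_ratioWeights hW t⟩
  step := h.ratio_step hW
  norm_le t i := by
    rw [norm_smul, norm_inv, Real.norm_of_nonneg (h.pos hW t i).le, inv_mul_eq_div]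
    exact div_le_div₀ ((norm_nonneg _).trans (he t i)) (he t i) (pow_pos hW.pos _)
      (h.pow_le hW t i)

theorem mean_state_step (h : IsPerturbedPushSum W y x e z) (t : ℕ) :
    mean ι E (x (t + 1)) = mean ι E (x t) - mean ι E (e t) := by
  rw [← map_sub, mean_apply, mean_apply]
  simp only [h.state_step]
  rw [sum_comm]
  simp only [← sum_smul, h.col_sum, one_smul, Pi.sub_apply]

theorem norm_ratio_sub_mean_state_le (h : IsPerturbedPushSum W y x e z)
    (hW : IsUniformlyConnected W β L) (t : ℕ) (i : ι) :
    ‖z t i - mean ι E (x t)‖ ≤ spread (z t) := by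
  have : Nonempty ι := ⟨i⟩
  have hmean : mean ι E (x t) = ∑ j, ((Fintype.card ι : ℝ)⁻¹ * y t j) • z t j := by
    simp only [mean_eq_sum, h.state_eq hW, mul_smul]
  rw [hmean]
  refine norm_sub_sum_smul_le_spread (fun j ↦ mul_nonneg (by positivity) (h.pos hW t j).le) ?_ _ i
  rw [← mul_sum, h.sum_eq_card, inv_mul_cancel₀ (by simp)]

end IsPerturbedPushSum

/-- The total disagreement up to time `T` is of order `1 + α * T`, so multiplying it by `α` leaves
a constant independent of `T`. -/
theorem exists_spread_bounds [Nonempty ι] (β G D₀ : ℝ) (L : ℕ) : ∃ M B : ℝ,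
    ∀ {W : ℕ → Matrix ι ι ℝ} {y : ℕ → ι → ℝ} {x g z : ℕ → ι → E} {α : ℝ} {T : ℕ},
      IsUniformlyConnected W β L → IsPerturbedPushSum W y x (fun t i ↦ α • g t i) z →
      (∀ t i, ‖g t i‖ ≤ G) → spread (x 0) = D₀ → 0 ≤ α → α ≤ 1 → α ^ 2 * T ≤ 1 →
      α * ∑ t ∈ range T, spread (z t) ≤ M ∧ ∀ t, spread (z t) ≤ B := by
  classical
  set N := Fintype.card ι * L
  set γ := (β * β ^ N / Fintype.card ι) ^ N
  set c := 2 * (N * (G / β ^ N))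
  refine ⟨(N * (D₀ + c) + c) / γ, D₀ + c + c / γ, ?_⟩
  intro W y x g z α T hW h hg hD₀ hα hα_le_one hαT
  have hQ := h.isUniformlyConnected_ratioWeights hW
  have hG : 0 ≤ G := (norm_nonneg _).trans (hg 0 (Classical.arbitrary ι))
  have hγ : 0 < γ := pow_pos hQ.pos N
  have hc : 0 ≤ c := by have := hW.pos; positivity
  have hN : 0 < N := Nat.mul_pos Fintype.card_pos hW.window_pos
  have havg := h.isPerturbedAveraging (δ := α * G) hW fun t i ↦ by
    rw [norm_smul, Real.norm_of_nonneg hα]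
    exact mul_le_mul_of_nonneg_left (hg t i) hα
  have hδ : 2 * (N * (α * G / β ^ N)) = α * c := by ring
  have hwindow (s : ℕ) (i : ι) : γ ≤ transition (ratioWeights W y) s N i (Classical.arbitrary ι) :=
    hQ.pow_le_transition s i _
  have hsum := havg.mul_sum_spread_le hwindow T
  have hbound := havg.spread_le_of_window hN hγ hwindow
  rw [h.ratio_zero, hD₀, hδ] at hsum hbound
  have hαc : α * c ≤ c := mul_le_of_le_one_left hc hα_le_one
  have hD₀_nonneg : 0 ≤ D₀ := hD₀ ▸ spread_nonneg _
  refine ⟨(le_div_iff₀ hγ).2 ?_, fun t ↦ (hbound t).trans (by gcongr)⟩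
  calc α * (∑ t ∈ range T, spread (z t)) * γ = α * (γ * ∑ t ∈ range T, spread (z t)) := by ring
    _ ≤ α * (N * (D₀ + α * c) + T * (α * c)) := by gcongr
    _ = α * (N * (D₀ + α * c)) + α ^ 2 * T * c := by ring
    _ ≤ 1 * (N * (D₀ + c)) + 1 * c := by gcongr
    _ = N * (D₀ + c) + c := by ring

end PushSum

section Objective

variable {f : ι → E → ℝ} {s c : E} {w : ι → E} {r : ℝ}

/-- The global objective `f = (1 / n) ∑ i, f i` of the network. -/
noncomputable def objective (f : ι → E → ℝ) (w : E) : ℝ := mean ι ℝ fun i ↦ f i w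

theorem convexOn_objective [AddCommGroup E] [Module ℝ E] {S : Set E} (hS : Convex ℝ S)
    (hf : ∀ i, ConvexOn ℝ S (f i)) : ConvexOn ℝ S (objective f) := by
  refine ⟨hS, fun v hv w hw a b ha hb hab ↦ ?_⟩
  simp only [objective]
  rw [← map_smul, ← map_smul, ← map_add]
  exact mean_mono fun i ↦ (hf i).2 hv hw ha hb hab

variable [NormedAddCommGroup E]

theorem objective_le_mean_add [Nonempty ι] {S : Set E} {K : ℝ≥0}
    (hf : ∀ i, LipschitzOnWith K (f i) S) (hc : c ∈ S) (hw : ∀ i, w i ∈ S)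
    (hr : ∀ i, ‖w i - c‖ ≤ r) : objective f c ≤ mean ι ℝ (fun i ↦ f i (w i)) + K * r := by
  calc objective f c ≤ mean ι ℝ ((fun i ↦ f i (w i)) + fun _ ↦ K * r) := mean_mono fun i ↦ by
        refine ((hf i).le_add_mul hc (hw i)).trans ?_
        rw [dist_comm, dist_eq_norm, Pi.add_apply]
        gcongr
        exact hr i
    _ = _ := by rw [map_add, mean_const]

variable [NormedSpace ℝ E] [FiniteDimensional ℝ E]

omit [Fintype ι] in
theorem exists_lipschitzOnWith_closedBall [Finite ι] (hf : ∀ i, ConvexOn ℝ Set.univ (f i)) (c : E)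
    (r : ℝ) : ∃ K : ℝ≥0, ∀ i, LipschitzOnWith K (f i) (Metric.closedBall c r) := by
  have := Fintype.ofFinite ι
  have := FiniteDimensional.proper ℝ E
  choose K hK using fun i ↦
    (hf i).locallyLipschitz.locallyLipschitzOn.exists_lipschitzOnWith_of_compact
      (isCompact_closedBall c r)
  exact ⟨univ.sup K, fun i ↦ (hK i).weaken (le_sup (mem_univ i))⟩

/-- Although the `f i` need not be globally Lipschitz, `K` is independent of the points `w i`:
contracting everything towards `s` brings the points into a ball where the `f i` are Lipschitz, and
convexity shows that the contraction scales both sides alike. -/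
theorem exists_objective_le_mean_add [Nonempty ι] (hf : ∀ i, ConvexOn ℝ Set.univ (f i))
    (hs : ∀ w, objective f s ≤ objective f w) :
    ∃ K : ℝ≥0, ∀ {w : ι → E} {c : E} {r : ℝ}, (∀ i, ‖w i - c‖ ≤ r) →
      objective f s ≤ mean ι ℝ (fun i ↦ f i (w i)) + K * r := by
  obtain ⟨K, hK⟩ := exists_lipschitzOnWith_closedBall hf s 1
  refine ⟨K, fun {w c r} hr ↦ ?_⟩
  have hnear (v : E) : ∀ᶠ θ in 𝓝[>] (0 : ℝ), AffineMap.lineMap s v θ ∈ Metric.closedBall s 1 :=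
    ((AffineMap.lineMap_continuous.tendsto' 0 s (by simp)).mono_left nhdsWithin_le_nhds).eventually
      (Metric.closedBall_mem_nhds s one_pos)
  obtain ⟨θ, ⟨hcθ, hwθ⟩, hθ, hθ_le_one⟩ :=
    (((hnear c).and (eventually_all.2 fun i ↦ hnear (w i))).and (Ioc_mem_nhdsGT one_pos)).exists
  have hrθ (i : ι) : ‖AffineMap.lineMap s (w i) θ - AffineMap.lineMap s c θ‖ ≤ θ * r := by
    simp only [AffineMap.lineMap_apply_module, add_sub_add_left_eq_sub, ← smul_sub]
    rw [norm_smul, Real.norm_of_nonneg hθ.le]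
    gcongr
    exact hr i
  have hconvex : mean ι ℝ (fun i ↦ f i (AffineMap.lineMap s (w i) θ)) ≤
      (1 - θ) * objective f s + θ * mean ι ℝ fun i ↦ f i (w i) := by
    rw [objective, ← smul_eq_mul, ← smul_eq_mul, ← map_smul, ← map_smul, ← map_add]
    refine mean_mono fun i ↦ ?_
    rw [AffineMap.lineMap_apply_module]
    exact (hf i).2 trivial trivial (sub_nonneg.2 hθ_le_one) hθ.le (sub_add_cancel 1 θ)
  have hlipschitz := (hs _).trans (objective_le_mean_add hK hcθ hwθ hrθ)
  refine le_of_mul_le_mul_left ?_ hθ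
  linarith

end Objective

section Descent

variable [NormedAddCommGroup E] [InnerProductSpace ℝ E] {f : ι → E → ℝ} {α G M B : ℝ}
  {u : ℕ → E} {g z : ℕ → ι → E} {s : E}

/-- Fixed-step descent of `u` along the mean of subgradients `g t i` of the `f i`, bounded by `G`.
They are evaluated not at `u t` but at points `z t i`, whose distance to `u t` is at most their
disagreement. -/
structure IsDistributedDescent (f : ι → E → ℝ) (α G : ℝ) (u : ℕ → E) (g z : ℕ → ι → E) :
    Prop where
  step : ∀ t, u (t + 1) = u t - α • mean ι E (g t)
  norm_le : ∀ t i, ‖g t i‖ ≤ G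
  subgradient : ∀ t i w, f i (z t i) + ⟪g t i, w - z t i⟫_ℝ ≤ f i w
  near : ∀ t i, ‖z t i - u t‖ ≤ spread (z t)

namespace IsDistributedDescent

theorem mean_sub_objective_le [Nonempty ι] (h : IsDistributedDescent f α G u g z) (s : E) (t : ℕ) :
    mean ι ℝ (fun i ↦ f i (z t i)) - objective f s ≤
      ⟪mean ι E (g t), u t - s⟫_ℝ + G * spread (z t) := by
  rw [objective, ← map_sub, mean_inner, ← mean_const (ι := ι) (G * spread (z t)), ← map_add]
  refine mean_mono fun i ↦ ?_
  have hinner : ⟪g t i, z t i - u t⟫_ℝ ≤ G * spread (z t) :=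
    (real_inner_le_norm _ _).trans (mul_le_mul (h.norm_le t i) (h.near t i) (norm_nonneg _)
      ((norm_nonneg _).trans (h.norm_le t i)))
  have hsubgradient := h.subgradient t i s
  simp only [Pi.sub_apply, Pi.add_apply, inner_sub_right] at hinner hsubgradient ⊢
  linarith

theorem norm_sub_sq_succ_le [Nonempty ι] (h : IsDistributedDescent f α G u g z) (hα : 0 ≤ α)
    (s : E) (t : ℕ) :
    ‖u (t + 1) - s‖ ^ 2 + 2 * α * (mean ι ℝ (fun i ↦ f i (z t i)) - objective f s) ≤
      ‖u t - s‖ ^ 2 + 2 * α * G * spread (z t) + α ^ 2 * G ^ 2 := by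
  have hexpand : ‖u (t + 1) - s‖ ^ 2 =
      ‖u t - s‖ ^ 2 - 2 * α * ⟪mean ι E (g t), u t - s⟫_ℝ + α ^ 2 * ‖mean ι E (g t)‖ ^ 2 := by
    rw [h.step, sub_right_comm, norm_sub_sq_real, real_inner_smul_right, norm_smul, mul_pow,
      Real.norm_eq_abs, sq_abs, real_inner_comm]
    ring
  have hnorm : α ^ 2 * ‖mean ι E (g t)‖ ^ 2 ≤ α ^ 2 * G ^ 2 := by
    gcongr
    exact norm_mean_le (h.norm_le t)
  have hgap := mul_le_mul_of_nonneg_left (h.mean_sub_objective_le s t) (by positivity : 0 ≤ 2 * α)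
  linarith

theorem norm_sub_sq_add_sum_le [Nonempty ι] (h : IsDistributedDescent f α G u g z) (hα : 0 ≤ α)
    (s : E) (t : ℕ) :
    ‖u t - s‖ ^ 2 +
        2 * α * ∑ τ ∈ range t, (mean ι ℝ (fun i ↦ f i (z τ i)) - objective f s) ≤
      ‖u 0 - s‖ ^ 2 + 2 * G * (α * ∑ τ ∈ range t, spread (z τ)) + α ^ 2 * t * G ^ 2 := by
  induction t with
  | zero => simp
  | succ t ih =>
    rw [sum_range_succ, sum_range_succ, Nat.cast_succ]
    linarith [h.norm_sub_sq_succ_le hα s t]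

theorem norm_sub_sq_add_sum_le_of_le [Nonempty ι] (h : IsDistributedDescent f α G u g z)
    (hα : 0 ≤ α) (s : E) {t : ℕ} (ht : α ^ 2 * t ≤ 1)
    (hM : α * ∑ τ ∈ range t, spread (z τ) ≤ M) :
    ‖u t - s‖ ^ 2 +
        2 * α * ∑ τ ∈ range t, (mean ι ℝ (fun i ↦ f i (z τ i)) - objective f s) ≤
      ‖u 0 - s‖ ^ 2 + 2 * G * M + G ^ 2 := by
  have hG : 0 ≤ G := (norm_nonneg _).trans (h.norm_le 0 (Classical.arbitrary ι))
  refine (h.norm_sub_sq_add_sum_le hα s t).trans ?_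
  gcongr
  exact mul_le_of_le_one_left (sq_nonneg G) ht

theorem norm_sub_le [Nonempty ι] (h : IsDistributedDescent f α G u g z) (hα : 0 ≤ α) {K : ℝ≥0}
    (hK : ∀ t, objective f s ≤ mean ι ℝ (fun i ↦ f i (z t i)) + K * spread (z t)) {t : ℕ}
    (ht : α ^ 2 * t ≤ 1) (hM : α * ∑ τ ∈ range t, spread (z τ) ≤ M) :
    ‖u t - s‖ ≤ √(‖u 0 - s‖ ^ 2 + 2 * (G + K) * M + G ^ 2) := by
  have hgap : -(K * ∑ τ ∈ range t, spread (z τ)) ≤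
      ∑ τ ∈ range t, (mean ι ℝ (fun i ↦ f i (z τ i)) - objective f s) := by
    rw [mul_sum, ← sum_neg_distrib]
    exact sum_le_sum fun τ _ ↦ by linarith [hK τ]
  have hgap' := mul_le_mul_of_nonneg_left hgap (by positivity : 0 ≤ 2 * α)
  have hKM := mul_le_mul_of_nonneg_left hM K.coe_nonneg
  refine Real.le_sqrt_of_sq_le ?_
  linarith [h.norm_sub_sq_add_sum_le_of_le hα s ht hM]

theorem objective_mean_le_mean_add [Nonempty ι] (h : IsDistributedDescent f α G u g z) {K : ℝ≥0}
    {R : ℝ} (hK : ∀ i, LipschitzOnWith K (f i) (Metric.closedBall s (B + R))) {t : ℕ}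
    (hB : spread (z t) ≤ B) (hR : ‖u t - s‖ ≤ R) :
    objective f (mean ι E (z t)) ≤ mean ι ℝ (fun i ↦ f i (z t i)) + K * spread (z t) := by
  have hz (i : ι) : z t i ∈ Metric.closedBall s (B + R) := by
    rw [mem_closedBall_iff_norm]
    exact (norm_sub_le_norm_sub_add_norm_sub _ (u t) _).trans
      (add_le_add ((h.near t i).trans hB) hR)
  exact objective_le_mean_add hK (mean_mem (convex_closedBall _ _) hz) hz
    (norm_sub_mean_le_spread (z t))

theorem objective_average_sub_le [Nonempty ι] (h : IsDistributedDescent f α G u g z) (hα : 0 < α)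
    (hf : ∀ i, ConvexOn ℝ Set.univ (f i)) {K : ℝ≥0} {T : ℕ} (hT : 0 < T) (hαT : α ^ 2 * T ≤ 1)
    (hM : α * ∑ t ∈ range T, spread (z t) ≤ M)
    (hK : ∀ t < T, objective f (mean ι E (z t)) ≤
      mean ι ℝ (fun i ↦ f i (z t i)) + K * spread (z t)) :
    objective f ((T : ℝ)⁻¹ • ∑ t ∈ range T, mean ι E (z t)) - objective f s ≤
      (‖u 0 - s‖ ^ 2 + 2 * (G + K) * M + G ^ 2) / 2 / (α * T) := by
  have hjensen : objective f ((T : ℝ)⁻¹ • ∑ t ∈ range T, mean ι E (z t)) ≤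
      (T : ℝ)⁻¹ * ∑ t ∈ range T, objective f (mean ι E (z t)) := by
    rw [smul_sum, mul_sum]
    exact (convexOn_objective convex_univ hf).map_sum_le (fun _ _ ↦ by positivity)
      (by simp [hT.ne']) fun _ _ ↦ trivial
  have hgap : ∑ t ∈ range T, objective f (mean ι E (z t)) - T * objective f s ≤
      ∑ t ∈ range T, (mean ι ℝ (fun i ↦ f i (z t i)) - objective f s) +
        K * ∑ t ∈ range T, spread (z t) := by
    rw [sum_sub_distrib, sum_const, card_range, nsmul_eq_mul, mul_sum, sub_add_eq_add_sub,
      ← sum_add_distrib]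
    gcongr with t ht
    exact hK t (mem_range.1 ht)
  have hdescent : 2 * α * ∑ t ∈ range T, (mean ι ℝ (fun i ↦ f i (z t i)) - objective f s) ≤
      ‖u 0 - s‖ ^ 2 + 2 * G * M + G ^ 2 :=
    (le_add_of_nonneg_left (sq_nonneg _)).trans (h.norm_sub_sq_add_sum_le_of_le hα.le s hαT hM)
  rw [le_div_iff₀ (by positivity)]
  calc (objective f ((T : ℝ)⁻¹ • ∑ t ∈ range T, mean ι E (z t)) - objective f s) * (α * T)
      ≤ ((T : ℝ)⁻¹ * ∑ t ∈ range T, objective f (mean ι E (z t)) - objective f s) * (α * T) := by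
        gcongr
    _ = α * (∑ t ∈ range T, objective f (mean ι E (z t)) - T * objective f s) := by field_simp
    _ ≤ α * (∑ t ∈ range T, (mean ι ℝ (fun i ↦ f i (z t i)) - objective f s) +
          K * ∑ t ∈ range T, spread (z t)) := by gcongr
    _ ≤ (‖u 0 - s‖ ^ 2 + 2 * (G + K) * M + G ^ 2) / 2 := by
        linarith [mul_le_mul_of_nonneg_left hM K.coe_nonneg]

end IsDistributedDescent

theorem IsPerturbedPushSum.isDistributedDescent {W : ℕ → Matrix ι ι ℝ} {y : ℕ → ι → ℝ}
    {x : ℕ → ι → E} {β : ℝ} {L : ℕ} (h : IsPerturbedPushSum W y x (fun t i ↦ α • g t i) z)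
    (hW : IsUniformlyConnected W β L) (hg : ∀ t i, ‖g t i‖ ≤ G)
    (hsub : ∀ t i w, f i (z t i) + ⟪g t i, w - z t i⟫_ℝ ≤ f i w) :
    IsDistributedDescent f α G (fun t ↦ mean ι E (x t)) g z where
  step t := by
    rw [h.mean_state_step, ← map_smul]
    rfl
  norm_le := hg
  subgradient := hsub
  near := h.norm_ratio_sub_mean_state_le hW

end Descent

end PushSubgradient

open PushSubgradient

theorem stmt_1_general {ι E : Type*} [Fintype ι] [Nonempty ι] [NormedAddCommGroup E]
    [InnerProductSpace ℝ E] [FiniteDimensional ℝ E] {f : ι → E → ℝ}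
    (hf : ∀ i, ConvexOn ℝ Set.univ (f i)) {s : E} (hs : ∀ w, objective f s ≤ objective f w)
    (β G : ℝ) (L : ℕ) (x₀ : ι → E) :
    ∃ C > 0, ∀ {W : ℕ → Matrix ι ι ℝ} {y : ℕ → ι → ℝ} {x g z : ℕ → ι → E} {α : ℝ} {T : ℕ},
      IsUniformlyConnected W β L → IsPerturbedPushSum W y x (fun t i ↦ α • g t i) z →
      (∀ t i, ‖g t i‖ ≤ G) → (∀ t i w, f i (z t i) + ⟪g t i, w - z t i⟫_ℝ ≤ f i w) →
      x 0 = x₀ → 0 < α → 0 < T → α ^ 2 * T ≤ 1 →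
      objective f ((T : ℝ)⁻¹ • ∑ t ∈ range T, mean ι E (z t)) - objective f s ≤ C / (α * T) := by
  obtain ⟨M, B, hMB⟩ := exists_spread_bounds (ι := ι) (E := E) β G (spread x₀) L
  obtain ⟨K, hK⟩ := exists_objective_le_mean_add hf hs
  set R := √(‖mean ι E x₀ - s‖ ^ 2 + 2 * (G + K) * M + G ^ 2)
  obtain ⟨K', hK'⟩ := exists_lipschitzOnWith_closedBall hf s (B + R)
  refine ⟨max ((‖mean ι E x₀ - s‖ ^ 2 + 2 * (G + K') * M + G ^ 2) / 2) 1, by positivity, ?_⟩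
  intro W y x g z α T hW h hg hsub hx₀ hα hT hαT
  have hα_le_one : α ≤ 1 := by
    refine (sq_le_one_iff₀ hα.le).1 (le_trans ?_ hαT)
    exact le_mul_of_one_le_right (sq_nonneg α) (Nat.one_le_cast.2 hT)
  have hstep {t : ℕ} (ht : t ≤ T) : α ^ 2 * t ≤ 1 := le_trans (by gcongr) hαT
  have hbounds {t : ℕ} (ht : t ≤ T) := hMB hW h hg (congrArg spread hx₀) hα.le hα_le_one (hstep ht)
  have hdescent := h.isDistributedDescent hW hg hsub
  subst hx₀
  have hobjective (t : ℕ) (ht : t < T) := hdescent.objective_mean_le_mean_add hK'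
    ((hbounds le_rfl).2 t) <| hdescent.norm_sub_le hα.le (fun τ ↦ hK (hdescent.near τ))
      (hstep ht.le) (hbounds ht.le).1
  refine (hdescent.objective_average_sub_le hα hf hT hαT (hbounds le_rfl).1 hobjective).trans ?_
  gcongr
  exact le_max_left _ _

theorem stmt_1
    (n : ℕ) (hn : 0 < n)
    (W : ℕ → Matrix (Fin n) (Fin n) ℝ)
    (hWnonneg : ∀ t i j, 0 ≤ W t i j)
    (hWcol : ∀ t j, ∑ i, W t i j = 1)
    (hWdiag : ∀ t i, 0 < W t i i)
    (β : ℝ) (hβ : 0 < β)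
    (hWβ : ∀ t i j, 0 < W t i j → β ≤ W t i j)
    (L : ℕ) (hL : 0 < L)
    (hUSC : ∀ t : ℕ, ∀ i j : Fin n,
      Relation.TransGen (fun u v : Fin n => ∃ k ∈ Finset.Ico t (t + L), 0 < W k v u) i j)
    (d : ℕ)
    (y : ℕ → Fin n → ℝ)
    (hy0 : ∀ i, y 0 i = 1)
    (hyrec : ∀ t i, y (t + 1) i = ∑ j, W t i j * y t j)
    (x g : ℕ → ℕ → Fin n → EuclideanSpace ℝ (Fin d))
    (x0 g0 : Fin n → EuclideanSpace ℝ (Fin d))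
    (hx0 : ∀ T, x T 0 = x0)
    (hg0 : ∀ T, g T 0 = g0)
    (hxrec : ∀ T : ℕ, 1 ≤ T → ∀ t i,
      x T (t + 1) i = ∑ j, W t i j • (x T t j - (1 / Real.sqrt T) • g T t j))
    (z : ℕ → ℕ → Fin n → EuclideanSpace ℝ (Fin d))
    (hz : ∀ T t i, z T t i = (y t i)⁻¹ • x T t i)
    (G : ℝ) (hG : ∀ T t i, ‖g T t i‖ ≤ G)
    (f : Fin n → EuclideanSpace ℝ (Fin d) → ℝ)
    (hconv : ∀ i, ConvexOn ℝ Set.univ (f i))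
    (F : EuclideanSpace ℝ (Fin d) → ℝ)
    (hF : ∀ w, F w = (n : ℝ)⁻¹ * ∑ i, f i w)
    (zstar : EuclideanSpace ℝ (Fin d))
    (hmin : ∀ w, F zstar ≤ F w)
    (hsub : ∀ T t j w, f j (z T t j) + ⟪g T t j, w - z T t j⟫_ℝ ≤ f j w)
    (zbar : ℕ → ℕ → EuclideanSpace ℝ (Fin d))
    (hzbar : ∀ T t, zbar T t = (n : ℝ)⁻¹ • ∑ i, z T t i)
    :
    ∃ C : ℝ, 0 < C ∧ ∀ T : ℕ, 1 ≤ T →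
      F ((T : ℝ)⁻¹ • ∑ τ ∈ Finset.range T, zbar T τ) - F zstar ≤ C / Real.sqrt T := by
  have : Nonempty (Fin n) := ⟨⟨0, hn⟩⟩
  obtain rfl : F = objective f := by
    funext w
    rw [hF, objective, mean_apply, Fintype.card_fin, smul_eq_mul]
  obtain ⟨C, hC, hbound⟩ := stmt_1_general hconv hmin β G L x0
  refine ⟨C, hC, fun T hT ↦ ?_⟩
  have hT_pos : (0 : ℝ) < T := Nat.cast_pos.2 hT
  have hW : IsUniformlyConnected W β L := ⟨hβ, hWnonneg, hWβ, hWdiag, hUSC⟩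
  have hpush : IsPerturbedPushSum W y (x T) (fun t i ↦ (1 / √T) • g T t i) (z T) :=
    ⟨⟨hWcol, funext hy0, fun t ↦ funext (hyrec t)⟩, hxrec T hT, hz T⟩
  have hzbar_mean (t : ℕ) : zbar T t = mean (Fin n) _ (z T t) := by
    rw [hzbar, mean_apply, Fintype.card_fin]
  have hαT : 1 / √T * T = √T := by rw [one_div_mul_eq_div, Real.div_sqrt]
  have hα_sq : (1 / √T) ^ 2 * T ≤ 1 := by
    rw [div_pow, Real.sq_sqrt hT_pos.le, one_pow, one_div_mul_cancel hT_pos.ne']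
  simpa only [hzbar_mean, hαT] using
    hbound hW hpush (hG T) (hsub T) (hx0 T) (by positivity) hT hα_sq
end
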